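/- Let n ≥ 5, p ≥ 1 and 1 < s < (n+4)/(n−4). If U = (u_1, …, u_p) : ℝ^n → ℝ^p is a nonnegative C⁴ solution of Δ² u_i = |U|^{s−1} u_i on all of ℝ^n for every i = 1, …, p, then U ≡ 0. -/

import Mathlib

open MeasureTheory Metric Filter Topology

/-- The Euclidean Laplacian: sum of second partial derivatives. -/
noncomputable def lap {n : ℕ} (u : EuclideanSpace ℝ (Fin n) → ℝ)
    (x : EuclideanSpace ℝ (Fin n)) : ℝ :=
  ∑ i : Fin n,
    fderiv ℝ (fun y => fderiv ℝ u y (EuclideanSpace.single i 1)) x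
      (EuclideanSpace.single i 1)

/-- The bi-Laplacian Δ² = Δ ∘ Δ. -/
noncomputable def bilap {n : ℕ} (u : EuclideanSpace ℝ (Fin n) → ℝ) :
    EuclideanSpace ℝ (Fin n) → ℝ :=
  lap (lap u)

/-- The pointwise Euclidean norm |U(x)| of a p-map U. -/
noncomputable def vnorm {n p : ℕ} (U : Fin p → EuclideanSpace ℝ (Fin n) → ℝ)
    (x : EuclideanSpace ℝ (Fin n)) : ℝ :=
  Real.sqrt (∑ i, U i x ^ 2)

abbrev EE (n : ℕ) := EuclideanSpace ℝ (Fin n)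

/-- polynomial bump -/
noncomputable def bump {n : ℕ} (j : ℕ) (y : EE n) : ℝ := (max (1 - ‖y‖ ^ 2) 0) ^ j

lemma hasDerivAt_max_pow (j : ℕ) (t : ℝ) :
    HasDerivAt (fun s : ℝ => (max s 0) ^ (j + 2)) ((j + 2) * (max t 0) ^ (j + 1)) t := by
  rcases lt_trichotomy t 0 with h | h | h
  · have : (fun s : ℝ => (max s 0) ^ (j + 2)) =ᶠ[𝓝 t] fun _ => 0 := by
      filter_upwards [Iio_mem_nhds h] with s hs
      simp [max_eq_right (le_of_lt (Set.mem_Iio.1 hs))]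
    rw [max_eq_right h.le]
    simpa using (hasDerivAt_const t (0 : ℝ)).congr_of_eventuallyEq this
  · subst h
    rw [hasDerivAt_iff_isLittleO]
    simp only [max_self, ne_eq, Nat.add_eq_zero_iff, one_ne_zero, and_false, not_false_eq_true,
      zero_pow, OfNat.ofNat_ne_zero, sub_zero, mul_zero, smul_eq_mul]
    have h1 : (fun s : ℝ => (max s 0) ^ (j + 1)) =o[𝓝 0] fun _ => (1 : ℝ) := by
      rw [Asymptotics.isLittleO_one_iff]
      have : Continuous fun s : ℝ => (max s 0) ^ (j + 1) := by fun_prop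
      simpa using this.tendsto 0
    have h2 : (fun s : ℝ => max s 0) =O[𝓝 0] fun s => s := by
      refine Asymptotics.IsBigO.of_bound 1 (Eventually.of_forall fun s => ?_)
      simp only [Real.norm_eq_abs, one_mul]
      rw [abs_of_nonneg (le_max_right _ _)]
      exact max_le (le_abs_self s) (abs_nonneg s)
    have := h1.mul_isBigO h2
    simpa [pow_succ] using this
  · have : (fun s : ℝ => (max s 0) ^ (j + 2)) =ᶠ[𝓝 t] fun s => s ^ (j + 2) := by
      filter_upwards [Ioi_mem_nhds h] with s hs
      simp [max_eq_left (le_of_lt (Set.mem_Ioi.1 hs))]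
    rw [max_eq_left h.le]
    have h3 := (hasDerivAt_pow (j + 2) t).congr_of_eventuallyEq this
    simpa using h3

lemma bump_hasFDerivAt {n : ℕ} (j : ℕ) (y : EE n) :
    HasFDerivAt (bump (n := n) (j + 2)) ((-(2 * (j + 2) * bump (j + 1) y)) • innerSL ℝ y) y := by
  have h1 : HasFDerivAt (fun y : EE n => 1 - ‖y‖ ^ 2) (-(2 • innerSL ℝ y)) y := by
    have := (hasStrictFDerivAt_norm_sq y).hasFDerivAt.const_sub 1
    exact this
  have := (hasDerivAt_max_pow j (1 - ‖y‖ ^ 2)).comp_hasFDerivAt y h1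
  refine this.congr_fderiv ?_
  ext v
  simp [bump]
  ring

lemma bump_fderiv {n : ℕ} (j : ℕ) (y v : EE n) :
    fderiv ℝ (bump (n := n) (j + 2)) y v = -(2 * (j + 2) * bump (j + 1) y) * inner ℝ y v := by
  rw [(bump_hasFDerivAt j y).fderiv]; simp

lemma bump_cont {n : ℕ} (j : ℕ) : Continuous (bump (n := n) j) := by
  unfold bump; fun_prop

lemma bump_nonneg {n : ℕ} (j : ℕ) (y : EE n) : 0 ≤ bump j y := by
  unfold bump; positivity

lemma bump_le_one {n : ℕ} (j : ℕ) (y : EE n) : bump j y ≤ 1 := by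
  unfold bump
  apply pow_le_one₀ (le_max_right _ _)
  apply max_le _ zero_le_one
  nlinarith [sq_nonneg ‖y‖]

lemma bump_anti {n : ℕ} {i j : ℕ} (h : i ≤ j) (y : EE n) : bump j y ≤ bump i y := by
  unfold bump
  apply pow_le_pow_of_le_one (le_max_right _ _) _ h
  apply max_le _ zero_le_one
  nlinarith [sq_nonneg ‖y‖]

lemma bump_zero_of {n : ℕ} (j : ℕ) (y : EE n) (hy : 1 ≤ ‖y‖) : bump (j + 1) y = 0 := by
  unfold bump
  rw [max_eq_right (by nlinarith)]; simp

lemma bump_supp {n : ℕ} (j : ℕ) : HasCompactSupport (bump (n := n) (j + 1)) := by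
  refine HasCompactSupport.intro (isCompact_closedBall 0 1) fun y hy => ?_
  apply bump_zero_of
  simp at hy; exact hy.le

lemma bump_sq {n : ℕ} (j : ℕ) (y : EE n) :
    ‖y‖ ^ 2 * bump (j + 1) y = bump (j + 1) y - bump (j + 2) y := by
  unfold bump
  rcases le_total (1 - ‖y‖ ^ 2) 0 with h | h
  · rw [max_eq_right h]; simp
  · rw [max_eq_left h]; ring

lemma bump_contDiff {n : ℕ} (j : ℕ) : ContDiff ℝ 1 (bump (n := n) (j + 2)) := by
  rw [contDiff_one_iff_fderiv]
  refine ⟨fun y => (bump_hasFDerivAt j y).differentiableAt, ?_⟩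
  have : fderiv ℝ (bump (n := n) (j + 2)) =
      fun y => (-(2 * (j + 2) * bump (j + 1) y)) • innerSL ℝ y := by
    ext1 y; exact (bump_hasFDerivAt j y).fderiv
  rw [this]
  have := bump_cont (n := n) (j + 1)
  fun_prop

/-- product of continuous and bump is integrable -/
lemma int_bump {n : ℕ} (j : ℕ) {g : EE n → ℝ} (hg : Continuous g) :
    Integrable (fun y => g y * bump (j + 1) y) := by
  apply Continuous.integrable_of_hasCompactSupport
  · exact hg.mul (bump_cont _)
  · exact (bump_supp j).mul_left

lemma ibp {n : ℕ} {v g : EE n → ℝ} (hv : ContDiff ℝ 1 v) (hg : ContDiff ℝ 1 g)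
    (hgs : HasCompactSupport g) (e : EE n) :
    ∫ y, fderiv ℝ v y e * g y = - ∫ y, v y * fderiv ℝ g y e := by
  have cv : Continuous fun y => fderiv ℝ v y e :=
    (hv.continuous_fderiv (by norm_num)).clm_apply continuous_const
  have cg : Continuous fun y => fderiv ℝ g y e :=
    (hg.continuous_fderiv (by norm_num)).clm_apply continuous_const
  have sg : HasCompactSupport fun y => fderiv ℝ g y e := by
    have := hgs.fderiv (𝕜 := ℝ)
    exact this.comp_left (g := fun (L : EE n →L[ℝ] ℝ) => L e) (by simp)
  have := integral_mul_fderiv_eq_neg_fderiv_mul_of_integrable (μ := volume) (f := v) (g := g)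
    (v := e)
    ((cv.mul hg.continuous).integrable_of_hasCompactSupport hgs.mul_left)
    ((hv.continuous.mul cg).integrable_of_hasCompactSupport sg.mul_left)
    ((hv.continuous.mul hg.continuous).integrable_of_hasCompactSupport hgs.mul_left)
    (fun x _ => (hv.differentiable (by norm_num)).differentiableAt)
    (fun x _ => (hg.differentiable (by norm_num)).differentiableAt)
  rw [this, neg_neg]

lemma inner_single' {n : ℕ} (y : EE n) (i : Fin n) :
    inner ℝ y (EuclideanSpace.single i 1) = y i := by
  have := EuclideanSpace.inner_single_right (𝕜 := ℝ) i (1 : ℝ) y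
  simpa using this

lemma sum_coord {n : ℕ} (L : EE n →L[ℝ] ℝ) (y : EE n) :
    ∑ i, L (EuclideanSpace.single i 1) * y i = L y := by
  conv_rhs => rw [← (EuclideanSpace.basisFun (Fin n) ℝ).sum_repr y]
  simp [mul_comm]

lemma cd_partial {n : ℕ} {k : ℕ} {v : EE n → ℝ} (hv : ContDiff ℝ (k + 1) v) (e : EE n) :
    ContDiff ℝ k fun y => fderiv ℝ v y e :=
  (hv.fderiv_right (m := k) le_rfl).clm_apply contDiff_const

lemma cd_lap {n : ℕ} {k : ℕ} {v : EE n → ℝ} (hv : ContDiff ℝ (k + 2) v) :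
    ContDiff ℝ k (lap v) := by
  unfold lap
  apply ContDiff.sum
  intro i _
  apply cd_partial
  have : ContDiff ℝ ((k + 1 : ℕ) + 1) v := by
    convert hv using 1
    push_cast; rw [add_assoc]; norm_num
  exact_mod_cast cd_partial this _

lemma cont_dir {n : ℕ} {v : EE n → ℝ} (hv : ContDiff ℝ 1 v) :
    Continuous fun y => fderiv ℝ v y y :=
  (hv.continuous_fderiv (by norm_num)).clm_apply continuous_id

lemma ibp_lap {n : ℕ} (j : ℕ) {v : EE n → ℝ} (hv : ContDiff ℝ 2 v) :
    ∫ y, lap v y * bump (j + 2) y = 2 * (j + 2) * ∫ y, fderiv ℝ v y y * bump (j + 1) y := by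
  have hv' : ContDiff ℝ ((1 : ℕ) + 1) v := by norm_num; exact hv
  have h1 : ∀ i : Fin n, ContDiff ℝ 1 fun y => fderiv ℝ v y (EuclideanSpace.single i 1) := by
    intro i; exact_mod_cast cd_partial hv' _
  have c1 : ∀ i : Fin n, Continuous fun y => fderiv ℝ v y (EuclideanSpace.single i 1) :=
    fun i => (h1 i).continuous
  have c2 : ∀ i : Fin n, Continuous fun x =>
      fderiv ℝ (fun y => fderiv ℝ v y (EuclideanSpace.single i 1)) x (EuclideanSpace.single i 1) :=
    fun i => ((h1 i).continuous_fderiv (by norm_num)).clm_apply continuous_const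
  have c3 : ∀ i : Fin n, Continuous fun y : EE n =>
      fderiv ℝ v y (EuclideanSpace.single i 1) * y i := fun i => (c1 i).mul (by fun_prop)
  have e1 : ∀ y, fderiv ℝ v y y * bump (j + 1) y =
      ∑ i, (fderiv ℝ v y (EuclideanSpace.single i 1) * y i) * bump (j + 1) y := by
    intro y; rw [← Finset.sum_mul, sum_coord]
  simp only [lap, Finset.sum_mul, e1]
  rw [integral_finsetSum _ (fun i _ => int_bump (j + 1) (c2 i)),
    integral_finsetSum _ (fun i _ => int_bump j (c3 i)), Finset.mul_sum]
  refine Finset.sum_congr rfl fun i _ => ?_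
  rw [ibp (h1 i) (bump_contDiff j) (bump_supp (j + 1)), ← integral_const_mul, ← integral_neg]
  congr 1; ext y
  rw [bump_fderiv, inner_single']
  ring

lemma ibp_dir {n : ℕ} (j : ℕ) {v : EE n → ℝ} (hv : ContDiff ℝ 1 v) :
    ∫ y, fderiv ℝ v y y * bump (j + 2) y =
      2 * (j + 2) * (∫ y, v y * bump (j + 1) y) - (n + 2 * (j + 2)) * ∫ y, v y * bump (j + 2) y := by
  have c1 : ∀ i : Fin n, Continuous fun y => fderiv ℝ v y (EuclideanSpace.single i 1) :=
    fun i => (hv.continuous_fderiv (by norm_num)).clm_apply continuous_const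
  have c3 : ∀ i : Fin n, Continuous fun y : EE n =>
      fderiv ℝ v y (EuclideanSpace.single i 1) * y i := fun i => (c1 i).mul (by fun_prop)
  have e1 : ∀ y, fderiv ℝ v y y * bump (j + 2) y =
      ∑ i, (fderiv ℝ v y (EuclideanSpace.single i 1) * y i) * bump (j + 2) y := by
    intro y; rw [← Finset.sum_mul, sum_coord]
  have hco : ∀ i : Fin n, ContDiff ℝ 1 fun y : EE n => y i := fun i => by fun_prop
  have hg : ∀ i : Fin n, ContDiff ℝ 1 fun y : EE n => y i * bump (j + 2) y :=
    fun i => (hco i).mul (bump_contDiff j)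
  have hgs : ∀ i : Fin n, HasCompactSupport fun y : EE n => y i * bump (j + 2) y :=
    fun i => (bump_supp (j + 1)).mul_left
  have hd : ∀ (i : Fin n) (y : EE n), fderiv ℝ (fun y : EE n => y i * bump (j + 2) y) y
      (EuclideanSpace.single i 1) = bump (j + 2) y - 2 * (j + 2) * (y i ^ 2 * bump (j + 1) y) := by
    intro i y
    have a1 : HasFDerivAt (fun y : EE n => y i) (EuclideanSpace.proj i : EE n →L[ℝ] ℝ) y :=
      (EuclideanSpace.proj i : EE n →L[ℝ] ℝ).hasFDerivAt
    have a2 := a1.mul (bump_hasFDerivAt j y)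
    change HasFDerivAt (fun y : EE n => y i * bump (j + 2) y) _ y at a2
    rw [a2.fderiv]
    simp [inner_single']
    ring
  simp only [e1]
  rw [integral_finsetSum _ (fun i _ => int_bump (j + 1) (c3 i))]
  have : ∀ i : Fin n, ∫ y, fderiv ℝ v y (EuclideanSpace.single i 1) * y i * bump (j + 2) y =
      - ∫ y, v y * (bump (j + 2) y - 2 * (j + 2) * (y i ^ 2 * bump (j + 1) y)) := by
    intro i
    have := ibp hv (hg i) (hgs i) (EuclideanSpace.single i 1)
    simp only [hd] at this
    rw [← this]
    congr 1; ext y; ring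
  simp only [this]
  rw [Finset.sum_neg_distrib, ← integral_finsetSum]
  · rw [← integral_const_mul, ← integral_const_mul, ← integral_sub, ← integral_neg]
    · congr 1; ext y
      rw [← Finset.mul_sum, Finset.sum_sub_distrib, ← Finset.mul_sum, ← Finset.sum_mul]
      have hn : ∑ i, y i ^ 2 = ‖y‖ ^ 2 := by
        rw [EuclideanSpace.norm_sq_eq]; simp
      rw [hn, bump_sq]
      simp
      ring
    · exact (int_bump j hv.continuous).const_mul _
    · exact (int_bump (j + 1) hv.continuous).const_mul _
  · intro i _
    have := (int_bump (n := n) (j + 1) hv.continuous).sub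
      ((int_bump (n := n) j (hv.continuous.mul
        ((hco i).continuous.pow 2))).const_mul (2 * (j + 2)))
    refine this.congr (Eventually.of_forall fun y => ?_)
    simp
    ring

lemma ibp_lap2 {n : ℕ} (j : ℕ) {v : EE n → ℝ} (hv : ContDiff ℝ 2 v) :
    ∫ y, lap v y * bump (j + 3) y =
      2 * (j + 3) * (2 * (j + 2) * (∫ y, v y * bump (j + 1) y)
        - (n + 2 * (j + 2)) * ∫ y, v y * bump (j + 2) y) := by
  have := ibp_lap (j + 1) hv
  rw [ibp_dir j (hv.of_le (by norm_num))] at this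
  rw [show j + 3 = j + 1 + 2 by ring, this]
  push_cast; ring

/-- The scaled function. -/
lemma lap_scale {n : ℕ} {u : EE n → ℝ} (hu : ContDiff ℝ 2 u) (a r : ℝ) (x y : EE n) :
    lap (fun y => a * u (x + r • y)) y = a * r ^ 2 * lap u (x + r • y) := by
  have hl : ∀ y : EE n, HasFDerivAt (fun y : EE n => x + r • y)
      (r • ContinuousLinearMap.id ℝ (EE n)) y := fun y =>
    ((hasFDerivAt_id y).const_smul r).const_add x
  have key : ∀ {v : EE n → ℝ}, ContDiff ℝ 1 v → ∀ (b : ℝ) (y e : EE n),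
      fderiv ℝ (fun y => b * v (x + r • y)) y e = (b * r) * fderiv ℝ v (x + r • y) e := by
    intro v hv b y e
    have h1 : HasFDerivAt v (fderiv ℝ v (x + r • y)) (x + r • y) :=
      (hv.differentiable (by norm_num)).differentiableAt.hasFDerivAt
    have := (h1.comp y (hl y)).const_mul b
    change HasFDerivAt (fun y => b * v (x + r • y)) _ y at this
    rw [HasFDerivAt.fderiv this]
    simp; ring
  unfold lap
  rw [Finset.mul_sum]
  refine Finset.sum_congr rfl fun i _ => ?_
  have hu' : ContDiff ℝ ((1 : ℕ) + 1) u := by norm_num; exact hu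
  simp only [key (hu.of_le (by norm_num))]
  rw [key (v := fun z => fderiv ℝ u z (EuclideanSpace.single i 1))
    (by exact_mod_cast cd_partial hu' _)]
  ring

lemma bilap_scale {n : ℕ} {u : EE n → ℝ} (hu : ContDiff ℝ 4 u) (a r : ℝ) (x y : EE n) :
    bilap (fun y => a * u (x + r • y)) y = a * r ^ 4 * bilap u (x + r • y) := by
  unfold bilap
  have h2 : ContDiff ℝ 2 u := hu.of_le (by norm_num)
  have : lap (fun y => a * u (x + r • y)) = fun y => (a * r ^ 2) * lap u (x + r • y) := by
    ext y; exact lap_scale h2 a r x y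
  rw [this, lap_scale]
  · ring
  · exact_mod_cast cd_lap (k := 2) (by norm_num; exact hu)


lemma bump_int_mono {n : ℕ} {i j : ℕ} (h : i ≤ j) {u : EE n → ℝ} (hu : Continuous u)
    (h0 : ∀ x, 0 ≤ u x) :
    ∫ y, u y * bump (j + 1) y ≤ ∫ y, u y * bump (i + 1) y :=
  integral_mono (int_bump _ hu) (int_bump _ hu) fun y =>
    mul_le_mul_of_nonneg_left (bump_anti (by omega) y) (h0 y)

lemma bump_int_nonneg {n : ℕ} (i : ℕ) {u : EE n → ℝ} (h0 : ∀ x, 0 ≤ u x) :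
    0 ≤ ∫ y, u y * bump i y :=
  integral_nonneg fun y => mul_nonneg (h0 y) (bump_nonneg _ _)

lemma cd_lap4 {n : ℕ} {u : EE n → ℝ} (hu : ContDiff ℝ 4 u) : ContDiff ℝ 2 (lap u) := by
  exact_mod_cast cd_lap (k := 2) (by norm_num; exact hu)

lemma cont_bilap {n : ℕ} {u : EE n → ℝ} (hu : ContDiff ℝ 4 u) : Continuous (bilap u) := by
  have : ContDiff ℝ (0 : ℕ) (lap (lap u)) := cd_lap (k := 0) (by simpa using cd_lap4 hu)
  exact this.continuous

lemma bilap_le {n : ℕ} (j : ℕ) : ∃ A : ℝ, 0 ≤ A ∧ ∀ u : EE n → ℝ, ContDiff ℝ 4 u →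
    (∀ x, 0 ≤ u x) → ∫ y, bilap u y * bump (j + 6) y ≤ A * ∫ y, u y * bump (j + 2) y := by
  refine ⟨2 * (j + 6) * (2 * (j + 5)) * (2 * (j + 4) * (2 * (j + 3))) +
    2 * (j + 6) * (n + 2 * (j + 5)) * (2 * (j + 5) * (n + 2 * (j + 4))), by positivity, ?_⟩
  intro u hu h0
  have e1 := ibp_lap2 (j + 3) (cd_lap4 hu)
  have hu2 : ContDiff ℝ 2 u := hu.of_le (by norm_num)
  have e2 := ibp_lap2 (j + 1) hu2
  have e3 := ibp_lap2 (j + 2) hu2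
  have m1 : ∫ y, u y * bump (j + 4) y ≤ ∫ y, u y * bump (j + 2) y :=
    bump_int_mono (i := j + 1) (j := j + 3) (by omega) hu.continuous h0
  have p1 : 0 ≤ ∫ y, u y * bump (j + 3) y := bump_int_nonneg _ h0
  have e1' : ∫ y, bilap u y * bump (j + 6) y = 2 * (j + 6) * (2 * (j + 5) *
      (∫ y, lap u y * bump (j + 4) y) - (n + 2 * (j + 5)) * ∫ y, lap u y * bump (j + 5) y) := by
    unfold bilap
    convert e1 using 1
    push_cast; ring_nf
  have e2' : ∫ y, lap u y * bump (j + 4) y ≤ 2 * (j + 4) * (2 * (j + 3)) *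
      ∫ y, u y * bump (j + 2) y := by
    have : ∫ y, lap u y * bump (j + 4) y = 2 * (j + 4) * (2 * (j + 3) *
      (∫ y, u y * bump (j + 2) y) - (n + 2 * (j + 3)) * ∫ y, u y * bump (j + 3) y) := by
      convert e2 using 1
      push_cast; ring_nf
    rw [this]
    have : (0 : ℝ) ≤ 2 * (j + 4) * ((n + 2 * (j + 3)) * ∫ y, u y * bump (j + 3) y) := by positivity
    linarith
  have e3' : -(2 * (j + 5) * (n + 2 * (j + 4)) * ∫ y, u y * bump (j + 2) y) ≤
      ∫ y, lap u y * bump (j + 5) y := by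
    have : ∫ y, lap u y * bump (j + 5) y = 2 * (j + 5) * (2 * (j + 4) *
      (∫ y, u y * bump (j + 3) y) - (n + 2 * (j + 4)) * ∫ y, u y * bump (j + 4) y) := by
      convert e3 using 1
      push_cast; ring_nf
    rw [this]
    have h1 : (0 : ℝ) ≤ 2 * (j + 5) * (2 * (j + 4) * ∫ y, u y * bump (j + 3) y) := by positivity
    have h2 : (0 : ℝ) ≤ 2 * (j + 5) * (n + 2 * (j + 4)) := by positivity
    have := mul_le_mul_of_nonneg_left m1 h2
    linarith
  rw [e1']
  have h1 : (0 : ℝ) ≤ 2 * (j + 6) * (2 * (j + 5)) := by positivity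
  have h2 : (0 : ℝ) ≤ 2 * (j + 6) * (n + 2 * (j + 5)) := by positivity
  have := mul_le_mul_of_nonneg_left e2' h1
  have := mul_le_mul_of_nonneg_left e3' h2
  linarith

lemma young_pt (s C : ℝ) (hs : 1 < s) (hC : 0 < C) (j : ℕ) (hj : 4 / (s - 1) ≤ j) :
    ∃ C' : ℝ, 0 ≤ C' ∧ ∀ u w : ℝ, 0 ≤ u → 0 ≤ w → w ≤ 1 →
      C * (u * w ^ (j + 2)) ≤ 1 / 2 * (u ^ s * w ^ (j + 6)) + C' * w ^ 1 := by
  refine ⟨C * (2 * C) ^ (s - 1)⁻¹, by positivity, ?_⟩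
  intro u w hu hw hw1
  have hs0 : 0 < s - 1 := by linarith
  have us : u ^ s = u ^ (s - 1) * u := by
    rcases hu.eq_or_lt with h | h
    · subst h; rw [Real.zero_rpow (by linarith)]; simp
    · rw [← Real.rpow_add_one h.ne']; ring_nf
  rcases le_or_gt (2 * C) (u ^ (s - 1) * w ^ 4) with h | h
  · have : (2 * C) * (u * w ^ (j + 2)) ≤ (u ^ (s - 1) * w ^ 4) * (u * w ^ (j + 2)) :=
      mul_le_mul_of_nonneg_right h (by positivity)
    have h2 : 0 ≤ C * (2 * C) ^ (s - 1)⁻¹ * w ^ 1 := by positivity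
    have h3 : (u ^ (s - 1) * w ^ 4) * (u * w ^ (j + 2)) = u ^ s * w ^ (j + 6) := by
      rw [us]; ring
    rw [h3] at this
    linarith
  · have h1 : u * w ^ (j + 1) ≤ (2 * C) ^ (s - 1)⁻¹ := by
      rw [Real.le_rpow_inv_iff_of_pos (by positivity) (by positivity) hs0]
      rw [Real.mul_rpow hu (by positivity)]
      refine le_trans (mul_le_mul_of_nonneg_left ?_ (by positivity)) h.le
      rcases hw.eq_or_lt with h0 | h0
      · subst h0
        simp [Real.zero_rpow hs0.ne']
      · rw [← Real.rpow_natCast w (j + 1), ← Real.rpow_mul hw, ← Real.rpow_natCast w 4]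
        apply Real.rpow_le_rpow_of_exponent_ge h0 hw1
        rw [div_le_iff₀ hs0] at hj
        push_cast
        nlinarith
    have h2 : C * (u * w ^ (j + 2)) ≤ C * (2 * C) ^ (s - 1)⁻¹ * w ^ 1 := by
      have := mul_le_mul_of_nonneg_left (mul_le_mul_of_nonneg_right h1 hw) hC.le
      calc _ = C * (u * w ^ (j + 1) * w) := by ring
        _ ≤ _ := this
        _ = _ := by ring
    have : 0 ≤ u ^ s * w ^ (j + 6) := by positivity
    linarith

/-- Universal bound (Mitidieri and Pohozaev test function argument). -/
lemma univ_bound (n : ℕ) (s : ℝ) (hs : 1 < s) (j : ℕ) (hj : 4 / (s - 1) ≤ j) :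
    ∃ C : ℝ, 0 ≤ C ∧ ∀ u : EE n → ℝ, ContDiff ℝ 4 u → (∀ x, 0 ≤ u x) →
      (∀ x, u x ^ s ≤ bilap u x) → ∫ y, u y * bump (j + 2) y ≤ C := by
  obtain ⟨A, hA, hAu⟩ := bilap_le (n := n) j
  obtain ⟨C', hC', hy⟩ := young_pt s (A + 1) hs (by linarith) j hj
  refine ⟨C' * ∫ y : EE n, bump 1 y, mul_nonneg hC' (integral_nonneg fun y => bump_nonneg _ _), ?_⟩
  intro u hu h0 hb
  have h1 := hAu u hu h0
  have cus : Continuous fun y => u y ^ s := hu.continuous.rpow_const fun _ => Or.inr (by linarith)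
  have h2 : ∫ y, u y ^ s * bump (j + 6) y ≤ ∫ y, bilap u y * bump (j + 6) y :=
    integral_mono (int_bump _ cus) (int_bump _ (cont_bilap hu)) fun y =>
      mul_le_mul_of_nonneg_right (hb y) (bump_nonneg _ _)
  have ib : Integrable (fun y : EE n => bump 1 y) := by
    simpa using int_bump (n := n) 0 (continuous_const (y := (1 : ℝ)))
  have h3 : (A + 1) * ∫ y, u y * bump (j + 2) y ≤
      1 / 2 * (∫ y, u y ^ s * bump (j + 6) y) + C' * ∫ y : EE n, bump 1 y := by
    rw [← integral_const_mul, ← integral_const_mul, ← integral_const_mul, ← integral_add]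
    · refine integral_mono ((int_bump _ hu.continuous).const_mul _)
        (((int_bump _ cus).const_mul _).add (ib.const_mul _)) fun y => ?_
      exact hy (u y) (max (1 - ‖y‖ ^ 2) 0) (h0 y) (le_max_right _ _)
        (max_le (by nlinarith [sq_nonneg ‖y‖]) zero_le_one)
    · exact (int_bump _ cus).const_mul _
    · exact ib.const_mul _
  have h4 := bump_int_nonneg (j + 2) h0
  nlinarith

lemma scaled_bound (n : ℕ) (s : ℝ) (hs : 1 < s) (j : ℕ) (hj : 4 / (s - 1) ≤ j) :
    ∃ C : ℝ, 0 ≤ C ∧ ∀ u : EE n → ℝ, ContDiff ℝ 4 u → (∀ x, 0 ≤ u x) →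
      (∀ x, u x ^ s ≤ bilap u x) → ∀ (x : EE n) (r : ℝ), 0 < r →
      ∫ y, u (x + r • y) * bump (j + 2) y ≤ C * r ^ (-(4 / (s - 1))) := by
  obtain ⟨C, hC, h⟩ := univ_bound n s hs j hj
  refine ⟨C, hC, fun u hu h0 hb x r hr => ?_⟩
  have hs0 : 0 < s - 1 := by linarith
  have h1 := h (fun y => r ^ (4 / (s - 1)) * u (x + r • y)) (by fun_prop)
    (fun y => mul_nonneg (by positivity) (h0 _)) ?_
  · simp only [mul_assoc, integral_const_mul] at h1
    rw [Real.rpow_neg hr.le, ← div_eq_mul_inv, le_div_iff₀ (by positivity)]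
    linarith
  · intro y
    rw [bilap_scale hu, Real.mul_rpow (by positivity) (h0 _), ← Real.rpow_mul hr.le]
    have : r ^ (4 / (s - 1) * s) = r ^ (4 / (s - 1)) * r ^ 4 := by
      rw [← Real.rpow_natCast r 4, ← Real.rpow_add hr]
      congr 1
      field_simp
      push_cast; ring
    rw [this]
    exact mul_le_mul_of_nonneg_left (hb _) (by positivity)

lemma deriv_mean {n : ℕ} {u g : EE n → ℝ} (hu : ContDiff ℝ 1 u) (hg : Continuous g)
    (hg1 : ∀ y, 1 ≤ ‖y‖ → g y = 0) (x : EE n) (r : ℝ) :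
    HasDerivAt (fun r : ℝ => ∫ y, u (x + r • y) * g y)
      (∫ y, fderiv ℝ u (x + r • y) y * g y) r := by
  have gs : HasCompactSupport g := HasCompactSupport.intro (isCompact_closedBall 0 1) fun y hy =>
    hg1 y (by simp at hy; exact hy.le)
  have cd : Continuous (fun q : ℝ × EE n => fderiv ℝ u (x + q.1 • q.2) q.2) := by
    have := hu.continuous_fderiv (by norm_num)
    fun_prop
  obtain ⟨M, hM⟩ := ((isCompact_closedBall r 1).prod
    (isCompact_closedBall (0 : EE n) 1)).exists_bound_of_continuousOn cd.continuousOn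
  refine (hasDerivAt_integral_of_dominated_loc_of_deriv_le
    (bound := fun y => M * ‖g y‖) (F' := fun r y => fderiv ℝ u (x + r • y) y * g y)
    (closedBall_mem_nhds r one_pos) ?_ ?_ ?_ ?_ ?_ ?_).2
  · refine Eventually.of_forall fun t => Continuous.aestronglyMeasurable ?_
    have := hu.continuous
    fun_prop
  · refine Continuous.integrable_of_hasCompactSupport ?_ gs.mul_left
    have := hu.continuous
    fun_prop
  · refine Continuous.aestronglyMeasurable (Continuous.mul ?_ hg)
    exact cd.comp (by fun_prop : Continuous fun y : EE n => (r, y))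
  · refine Eventually.of_forall fun y t ht => ?_
    rcases le_or_gt ‖y‖ 1 with h | h
    · rw [norm_mul]
      exact mul_le_mul_of_nonneg_right (hM (t, y) ⟨ht, by simpa using h⟩) (norm_nonneg _)
    · rw [hg1 y h.le]; simp
  · exact ((hg.integrable_of_hasCompactSupport gs).norm).const_mul M
  · refine Eventually.of_forall fun y t _ => ?_
    have h1 : HasFDerivAt u (fderiv ℝ u (x + t • y)) (x + t • y) :=
      (hu.differentiable (by norm_num)).differentiableAt.hasFDerivAt
    have h2 : HasDerivAt (fun t : ℝ => x + t • y) y t := by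
      simpa using ((hasDerivAt_id t).smul_const y).const_add x
    exact (h1.comp_hasDerivAt t h2).mul_const (g y)

/-- Representation formula, first form. -/
lemma repr1 (n : ℕ) (s : ℝ) (hs : 1 < s) (j : ℕ) (hj : 4 / (s - 1) ≤ j) :
    ∃ c : ℝ, ∀ u : EE n → ℝ, ContDiff ℝ 4 u → (∀ x, 0 ≤ u x) →
      (∀ x, u x ^ s ≤ bilap u x) → ∀ x : EE n,
      IntegrableOn (fun r : ℝ => r ^ 3 * ∫ y, bilap u (x + r • y) * bump (j + 6) y) (Set.Ioi 0) ∧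
      ∫ r in Set.Ioi (0 : ℝ), r ^ 3 * ∫ y, bilap u (x + r • y) * bump (j + 6) y = c * u x := by
  obtain ⟨C, hC, hbound⟩ := scaled_bound n s hs j hj
  set P : ℝ := 2 * (j + 6) * (2 * (j + 5)) * (2 * (j + 4)) with hP
  set Q : ℝ := 2 * (j + 6) * (n + 2 * (j + 5)) * (2 * (j + 5)) with hQ
  have hP0 : 0 ≤ P := by positivity
  have hQ0 : 0 ≤ Q := by positivity
  set g : EE n → ℝ := fun y => P * bump (j + 3) y - Q * bump (j + 4) y with hg
  have cg : Continuous g := ((bump_cont _).const_mul P).sub ((bump_cont _).const_mul Q)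
  have g1 : ∀ y, 1 ≤ ‖y‖ → g y = 0 := by
    intro y hy
    simp [hg, bump_zero_of (j + 2) y hy, bump_zero_of (j + 3) y hy]
  have gb : ∀ y, |g y| ≤ (P + Q) * bump (j + 2) y := by
    intro y
    have a1 := bump_anti (show j + 2 ≤ j + 3 by omega) y
    have a2 := bump_anti (show j + 2 ≤ j + 4 by omega) y
    have a3 := bump_nonneg (j + 3) y
    have a4 := bump_nonneg (j + 4) y
    rw [abs_le]
    constructor <;> simp only [hg] <;> nlinarith
  refine ⟨-∫ y, g y, fun u hu h0 hb x => ?_⟩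
  have hu1 : ContDiff ℝ 1 u := hu.of_le (by norm_num)
  set G : ℝ → ℝ := fun r => ∫ y, u (x + r • y) * g y with hG
  have hd := deriv_mean hu1 cg g1 x
  have hd' : ∀ r ∈ Set.Ioi (0 : ℝ),
      HasDerivAt G (r ^ 3 * ∫ y, bilap u (x + r • y) * bump (j + 6) y) r := by
    intro r hr
    have hr0 : r ≠ 0 := ne_of_gt hr
    convert hd r using 1
    set v : EE n → ℝ := fun y => 1 * u (x + r • y) with hv
    have hv4 : ContDiff ℝ 4 v := by fun_prop
    have hv2 : ContDiff ℝ 2 v := hv4.of_le (by norm_num)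
    have hv1 : ContDiff ℝ 1 v := hv4.of_le (by norm_num)
    have hdir : ∀ y, fderiv ℝ v y y = r * fderiv ℝ u (x + r • y) y := by
      intro y
      have h1 : HasFDerivAt u (fderiv ℝ u (x + r • y)) (x + r • y) :=
        (hu1.differentiable (by norm_num)).differentiableAt.hasFDerivAt
      have hl : HasFDerivAt (fun y : EE n => x + r • y)
        (r • ContinuousLinearMap.id ℝ (EE n)) y := ((hasFDerivAt_id y).const_smul r).const_add x
      have := (h1.comp y hl).const_mul 1
      change HasFDerivAt v _ y at this
      rw [this.fderiv]
      simp
    have e1 := ibp_lap2 (j + 3) (cd_lap4 hv4)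
    have e2 := ibp_lap (j + 2) hv2
    have e3 := ibp_lap (j + 3) hv2
    have e1' : ∫ y, bilap v y * bump (j + 6) y = 2 * (j + 6) * (2 * (j + 5) *
      (∫ y, lap v y * bump (j + 4) y) - (n + 2 * (j + 5)) * ∫ y, lap v y * bump (j + 5) y) := by
      unfold bilap
      convert e1 using 1
      push_cast; ring_nf
    rw [show j + 2 + 2 = j + 4 by ring, show j + 2 + 1 = j + 3 by ring] at e2
    rw [show j + 3 + 2 = j + 5 by ring, show j + 3 + 1 = j + 4 by ring] at e3
    push_cast at e2 e3
    have e4 : ∫ y, fderiv ℝ v y y * g y = P * (∫ y, fderiv ℝ v y y * bump (j + 3) y)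
        - Q * ∫ y, fderiv ℝ v y y * bump (j + 4) y := by
      rw [← integral_const_mul, ← integral_const_mul, ← integral_sub]
      · congr 1; ext y; simp only [hg]; ring
      · exact (int_bump _ (cont_dir hv1)).const_mul _
      · exact (int_bump _ (cont_dir hv1)).const_mul _
    have e5 : ∫ y, bilap v y * bump (j + 6) y = ∫ y, fderiv ℝ v y y * g y := by
      rw [e1', e2, e3, e4, hP, hQ]; ring
    simp only [hdir] at e5
    simp only [hv, bilap_scale hu, mul_assoc, integral_const_mul] at e5
    have : r * (r ^ 3 * ∫ y, bilap u (x + r • y) * bump (j + 6) y) =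
        r * ∫ y, fderiv ℝ u (x + r • y) y * g y := by
      rw [← e5]; ring
    exact mul_left_cancel₀ hr0 this
  have hpos : ∀ r ∈ Set.Ioi (0 : ℝ),
      0 ≤ r ^ 3 * ∫ y, bilap u (x + r • y) * bump (j + 6) y := by
    intro r hr
    have : (0:ℝ) < r := hr
    refine mul_nonneg (by positivity) (integral_nonneg fun y => mul_nonneg ?_ (bump_nonneg _ _))
    exact le_trans (Real.rpow_nonneg (h0 _) _) (hb _)
  have hlim : Tendsto G atTop (𝓝 0) := by
    have hs0 : 0 < s - 1 := by linarith
    have t1 : Tendsto (fun r : ℝ => (P + Q) * (C * r ^ (-(4 / (s - 1))))) atTop (𝓝 0) := by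
      have := (tendsto_rpow_neg_atTop (show 0 < 4 / (s - 1) by positivity))
      simpa using (this.const_mul C).const_mul (P + Q)
    refine squeeze_zero_norm' ?_ t1
    filter_upwards [eventually_gt_atTop 0] with r hr
    refine le_trans ?_ (mul_le_mul_of_nonneg_left (hbound u hu h0 hb x r hr) (by positivity))
    have cu : Continuous fun y : EE n => u (x + r • y) := by
      have := hu.continuous; fun_prop
    rw [← integral_const_mul]
    refine norm_integral_le_of_norm_le ((int_bump _ cu).const_mul _)
      (Eventually.of_forall fun y => ?_)
    rw [norm_mul, Real.norm_eq_abs, Real.norm_eq_abs, abs_of_nonneg (h0 _)]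
    have := mul_le_mul_of_nonneg_left (gb y) (h0 (x + r • y))
    linarith
  have hc : ContinuousWithinAt G (Set.Ici 0) 0 := (hd 0).continuousAt.continuousWithinAt
  refine ⟨integrableOn_Ioi_deriv_of_nonneg hc hd' hpos hlim, ?_⟩
  rw [integral_Ioi_of_hasDerivAt_of_nonneg hc hd' hpos hlim]
  simp only [hG, zero_smul, add_zero, integral_const_mul]
  ring

noncomputable def omg (n m : ℕ) (r : ℝ) : ℝ := r ^ 3 / r ^ n * (max (1 - (r⁻¹) ^ 2) 0) ^ m

lemma omg_nonneg (n m : ℕ) (r : ℝ) (hr : 0 < r) : 0 ≤ omg n m r := by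
  unfold omg; positivity

lemma omg_meas (n m : ℕ) : Measurable (omg n m) := by
  unfold omg; fun_prop

lemma omg_int (n m : ℕ) (hn : 5 ≤ n) : IntegrableOn (omg n (m + 1)) (Set.Ioi 0) := by
  have h1 : IntegrableOn (omg n (m + 1)) (Set.Ioc 0 1) := by
    refine (integrableOn_zero).congr_fun (fun r hr => ?_) measurableSet_Ioc
    have : 1 ≤ r⁻¹ := (one_le_inv₀ hr.1).2 hr.2
    unfold omg
    rw [max_eq_right (by nlinarith)]
    simp
  have h2 : IntegrableOn (omg n (m + 1)) (Set.Ioi 1) := by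
    have := integrableOn_Ioi_rpow_of_lt (show (-2 : ℝ) < -1 by norm_num) one_pos
    refine Integrable.mono' this (omg_meas _ _).aestronglyMeasurable ?_
    filter_upwards [self_mem_ae_restrict measurableSet_Ioi] with r hr
    have hr1 : (1 : ℝ) < r := hr
    have hr0 : (0 : ℝ) < r := by linarith
    rw [Real.norm_eq_abs, abs_of_nonneg (omg_nonneg _ _ _ hr0), Real.rpow_neg hr0.le]
    unfold omg
    have a1 : (max (1 - (r⁻¹) ^ 2) 0) ^ (m + 1) ≤ 1 := by
      apply pow_le_one₀ (le_max_right _ _)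
      exact max_le (by nlinarith [sq_nonneg r⁻¹]) zero_le_one
    have a2 : r ^ 3 / r ^ n ≤ (r ^ (2 : ℝ))⁻¹ := by
      rw [div_le_iff₀ (by positivity)]
      have : r ^ (2 : ℝ) = r ^ 2 := by exact_mod_cast Real.rpow_natCast r 2
      rw [this, ← div_eq_inv_mul, le_div_iff₀ (by positivity), ← pow_add]
      exact pow_le_pow_right₀ hr1.le hn
    calc _ ≤ r ^ 3 / r ^ n * 1 := mul_le_mul_of_nonneg_left a1 (by positivity)
      _ ≤ _ := by rw [mul_one]; exact a2
  have := h1.union h2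
  rwa [Set.Ioc_union_Ioi_eq_Ioi zero_le_one] at this

lemma omg_pos (n m : ℕ) (hn : 5 ≤ n) : 0 < ∫ r in Set.Ioi (0 : ℝ), omg n (m + 1) r := by
  rw [setIntegral_pos_iff_support_of_nonneg_ae]
  · have : Set.Ioi (1 : ℝ) ⊆ Function.support (omg n (m + 1)) ∩ Set.Ioi 0 := by
      intro r hr
      have hr1 : (1 : ℝ) < r := hr
      have hr0 : (0 : ℝ) < r := by linarith
      refine ⟨?_, hr0⟩
      have : r⁻¹ < 1 := inv_lt_one_of_one_lt₀ hr1
      have h2 : 0 < r⁻¹ := by positivity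
      unfold omg
      rw [Function.mem_support, max_eq_left (by nlinarith)]
      have : 0 < 1 - r⁻¹ ^ 2 := by nlinarith
      positivity
    refine lt_of_lt_of_le ?_ (measure_mono this)
    simp
  · filter_upwards [self_mem_ae_restrict measurableSet_Ioi] with r hr
    exact omg_nonneg _ _ _ hr
  · exact omg_int n m hn

lemma inner_kernel (n m : ℕ) (hn : 5 ≤ n) (w : EE n) (hw : w ≠ 0) :
    ∫⁻ r in Set.Ioi (0 : ℝ), ENNReal.ofReal (r ^ 3 / r ^ n * bump (m + 1) (r⁻¹ • w)) =
      ENNReal.ofReal ((∫ r in Set.Ioi (0 : ℝ), omg n (m + 1) r) / ‖w‖ ^ (n - 4)) := by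
  have hw0 : 0 < ‖w‖ := norm_pos_iff.2 hw
  have e : ∀ r ∈ Set.Ioi (0 : ℝ), r ^ 3 / r ^ n * bump (m + 1) (r⁻¹ • w) =
      ‖w‖ ^ 3 / ‖w‖ ^ n * omg n (m + 1) (‖w‖⁻¹ * r) := by
    intro r hr
    have hr0 : (0 : ℝ) < r := hr
    unfold omg bump
    rw [norm_smul, mul_inv, inv_inv, Real.norm_eq_abs, abs_of_pos (inv_pos.2 hr0),
      mul_comm r⁻¹, mul_pow, mul_pow]
    field_simp
    rw [div_pow]
    field_simp
  rw [setLIntegral_congr_fun measurableSet_Ioi (fun r hr => by rw [e r hr])]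
  have hIgr : IntegrableOn (fun r => omg n (m + 1) (‖w‖⁻¹ * r)) (Set.Ioi 0) := by
    have := (integrableOn_Ioi_comp_mul_left_iff (omg n (m + 1)) 0 (inv_pos.2 hw0)).2
    simp only [mul_zero] at this
    exact this (omg_int n m hn)
  rw [← ofReal_integral_eq_lintegral_ofReal]
  · congr 1
    rw [integral_const_mul, integral_comp_mul_left_Ioi _ _ (inv_pos.2 hw0)]
    simp only [mul_zero, smul_eq_mul, inv_inv]
    obtain ⟨k, rfl⟩ : ∃ k, n = k + 4 := ⟨n - 4, by omega⟩
    simp only [Nat.add_sub_cancel]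
    field_simp
    ring
  · exact hIgr.const_mul _
  · filter_upwards [self_mem_ae_restrict measurableSet_Ioi] with r hr
    have hr0 : (0 : ℝ) < r := hr
    exact mul_nonneg (by positivity) (omg_nonneg _ _ _ (by positivity))

lemma change_var (n m : ℕ) (f : EE n → ℝ) (x : EE n) (r : ℝ) (hr : 0 < r) :
    ∫ y, f (x + r • y) * bump m y = (r ^ n)⁻¹ * ∫ z, f z * bump m (r⁻¹ • (z - x)) := by
  have h1 := Measure.integral_comp_smul (volume : Measure (EE n))
    (fun z => f (x + z) * bump m (r⁻¹ • z)) r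
  simp only [smul_smul, inv_mul_cancel₀ hr.ne', one_smul, finrank_euclideanSpace,
    Fintype.card_fin, smul_eq_mul] at h1
  rw [h1, abs_of_pos (by positivity)]
  congr 1
  have h2 := integral_add_left_eq_self (μ := (volume : Measure (EE n)))
    (fun z => f z * bump m (r⁻¹ • (z - x))) x
  rw [← h2]
  simp

/-- Representation formula. -/
lemma repr2 (n : ℕ) (hn : 5 ≤ n) (s : ℝ) (hs : 1 < s) :
    ∃ c : ℝ, ∀ u : EE n → ℝ, ContDiff ℝ 4 u → (∀ x, 0 ≤ u x) →
      (∀ x, u x ^ s ≤ bilap u x) → ∀ x : EE n,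
      Integrable (fun z => bilap u z / ‖x - z‖ ^ (n - 4)) ∧
      ∫ z, bilap u z / ‖x - z‖ ^ (n - 4) = c * u x := by
  obtain ⟨j, hj⟩ := exists_nat_ge (4 / (s - 1))
  obtain ⟨c, hc⟩ := repr1 n s hs j hj
  set κ := ∫ r in Set.Ioi (0 : ℝ), omg n (j + 5 + 1) r with hκ
  have hκ0 : 0 < κ := omg_pos n (j + 5) hn
  refine ⟨c / κ, fun u hu h0 hb x => ?_⟩
  obtain ⟨hi, he⟩ := hc u hu h0 hb x
  set f := bilap u with hf
  have cf : Continuous f := cont_bilap hu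
  have f0 : ∀ z, 0 ≤ f z := fun z => le_trans (Real.rpow_nonneg (h0 _) _) (hb z)
  have hpos : ∀ r ∈ Set.Ioi (0 : ℝ),
      0 ≤ r ^ 3 * ∫ y, f (x + r • y) * bump (j + 6) y := by
    intro r hr
    have : (0:ℝ) < r := hr
    exact mul_nonneg (by positivity) (bump_int_nonneg (u := fun y => f (x + r • y)) _
      (fun y => f0 _))
  have hc0 : 0 ≤ c * u x := by
    rw [← he]; exact setIntegral_nonneg measurableSet_Ioi hpos
  have L1 : ∫⁻ r in Set.Ioi (0 : ℝ), ENNReal.ofReal (r ^ 3 * ∫ y, f (x + r • y) * bump (j + 6) y)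
      = ENNReal.ofReal (c * u x) := by
    rw [← he, ofReal_integral_eq_lintegral_ofReal hi]
    filter_upwards [self_mem_ae_restrict measurableSet_Ioi] with r hr
    exact hpos r hr
  have L2 : ∀ r ∈ Set.Ioi (0 : ℝ),
      ENNReal.ofReal (r ^ 3 * ∫ y, f (x + r • y) * bump (j + 6) y) =
      ∫⁻ z, ENNReal.ofReal (f z) * ENNReal.ofReal (r ^ 3 / r ^ n * bump (j + 6) (r⁻¹ • (z - x))) := by
    intro r hr
    have hr0 : (0:ℝ) < r := hr
    rw [change_var n _ f x r hr0, ← mul_assoc, ← integral_const_mul,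
      ofReal_integral_eq_lintegral_ofReal]
    · congr 1; ext z
      rw [← ENNReal.ofReal_mul (f0 z)]
      congr 1
      rw [div_eq_mul_inv]; ring
    · apply Integrable.const_mul
      have cb := bump_cont (n := n) (j + 6)
      refine Continuous.integrable_of_hasCompactSupport (by fun_prop) ?_
      refine HasCompactSupport.intro (isCompact_closedBall x r) fun z hz => ?_
      rw [bump_zero_of (j + 5), mul_zero]
      rw [norm_smul, Real.norm_eq_abs, abs_of_pos (inv_pos.2 hr0), ← div_eq_inv_mul,
        le_div_iff₀ hr0, one_mul]
      simp [dist_eq_norm] at hz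
      exact hz.le
    · refine Eventually.of_forall fun z => ?_
      exact mul_nonneg (by positivity) (mul_nonneg (f0 _) (bump_nonneg _ _))
  rw [setLIntegral_congr_fun measurableSet_Ioi L2, lintegral_lintegral_swap] at L1
  · have L3 : ∀ᵐ z : EE n, ∫⁻ r in Set.Ioi (0 : ℝ), ENNReal.ofReal (f z) *
        ENNReal.ofReal (r ^ 3 / r ^ n * bump (j + 6) (r⁻¹ • (z - x))) =
        ENNReal.ofReal (κ * (f z / ‖x - z‖ ^ (n - 4))) := by
      have : NeZero n := ⟨by omega⟩
      have : Nontrivial (EE n) := by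
        have : Nonempty (Fin n) := ⟨0⟩
        infer_instance
      have hx : ∀ᵐ z : EE n, z ≠ x := by
        simp [ae_iff]
      filter_upwards [hx] with z hz
      rw [lintegral_const_mul' _ _ ENNReal.ofReal_ne_top,
        inner_kernel n (j + 5) hn (z - x) (sub_ne_zero.2 hz), ← ENNReal.ofReal_mul (f0 z),
        norm_sub_rev x z]
      congr 1
      rw [← hκ]; ring
    rw [lintegral_congr_ae L3] at L1
    have nn : ∀ z, 0 ≤ κ * (f z / ‖x - z‖ ^ (n - 4)) := fun z =>
      mul_nonneg hκ0.le (div_nonneg (f0 z) (by positivity))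
    have me : Measurable fun z => f z / ‖x - z‖ ^ (n - 4) := by
      have := cf.measurable
      fun_prop
    have I1 : Integrable fun z => κ * (f z / ‖x - z‖ ^ (n - 4)) := by
      refine ⟨(me.const_mul κ).aestronglyMeasurable, ?_⟩
      rw [hasFiniteIntegral_iff_ofReal (Eventually.of_forall nn), L1]
      exact ENNReal.ofReal_lt_top
    have I2 : Integrable fun z => f z / ‖x - z‖ ^ (n - 4) := by
      have := I1.const_mul κ⁻¹
      refine this.congr (Eventually.of_forall fun z => ?_)
      simp only []
      field_simp
    refine ⟨I2, ?_⟩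
    have := integral_eq_lintegral_of_nonneg_ae (Eventually.of_forall nn) I1.1
    rw [L1, ENNReal.toReal_ofReal hc0, integral_const_mul] at this
    rw [div_mul_eq_mul_div, eq_div_iff hκ0.ne', ← this]; ring
  · have := cf.measurable
    have mb := (bump_cont (n := n) (j + 6)).measurable
    refine Measurable.aemeasurable ?_
    unfold Function.uncurry
    fun_prop


/-- inversion in the sphere of radius `l` about the origin -/
noncomputable def kv {n : ℕ} (l : ℝ) (z : EE n) : EE n := (l / ‖z‖) ^ 2 • z

lemma kv_eq {n : ℕ} (l : ℝ) : (kv l : EE n → EE n) = EuclideanGeometry.inversion 0 l := by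
  ext1 z
  simp [kv, EuclideanGeometry.inversion]

lemma norm_kv {n : ℕ} (l : ℝ) (z : EE n) : ‖kv l z‖ = l ^ 2 / ‖z‖ := by
  by_cases h : z = 0
  · simp [kv, h]
  have : ‖z‖ ≠ 0 := norm_ne_zero_iff.2 h
  rw [kv, norm_smul, Real.norm_of_nonneg (by positivity)]
  field_simp

lemma kv_kv {n : ℕ} {l : ℝ} (hl : 0 < l) (z : EE n) : kv l (kv l z) = z := by
  rw [kv_eq]; exact EuclideanGeometry.inversion_inversion 0 hl.ne' z

lemma kv_image {n : ℕ} {l : ℝ} (hl : 0 < l) :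
    kv l '' {z : EE n | l < ‖z‖} = ball 0 l \ {0} := by
  ext w
  constructor
  · rintro ⟨z, hz, rfl⟩
    simp only [Set.mem_ofPred_eq] at hz
    have hz0 : 0 < ‖z‖ := hl.trans hz
    refine ⟨?_, ?_⟩
    · rw [mem_ball_zero_iff, norm_kv, div_lt_iff₀ hz0]; nlinarith
    · simp only [Set.mem_singleton_iff]
      rw [← norm_eq_zero, norm_kv]; positivity
  · rintro ⟨h1, h2⟩
    refine ⟨kv l w, ?_, kv_kv hl w⟩
    simp only [Set.mem_singleton_iff] at h2
    rw [mem_ball_zero_iff] at h1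
    have : 0 < ‖w‖ := norm_pos_iff.2 h2
    simp only [Set.mem_ofPred_eq]
    rw [norm_kv, lt_div_iff₀ this]; nlinarith

lemma kv_deriv {n : ℕ} {l : ℝ} (z : EE n) (hz : z ≠ 0) :
    ∃ A : EE n →L[ℝ] EE n, HasFDerivAt (kv l) A z ∧ |A.det| = (l / ‖z‖) ^ (2 * n) := by
  refine ⟨_, by rw [kv_eq]; exact EuclideanGeometry.hasFDerivAt_inversion hz, ?_⟩
  rw [ContinuousLinearMap.det, ContinuousLinearMap.toLinearMap_smul, LinearMap.det_smul]
  simp only [finrank_euclideanSpace, Fintype.card_fin, dist_zero_right, sub_zero]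
  have := (Submodule.span ℝ {z})ᗮ.det_reflection (𝕜 := ℝ)
  rw [abs_mul]
  have h2 : |LinearMap.det (((Submodule.span ℝ {z})ᗮ.reflection : EE n →L[ℝ] EE n) : EE n →ₗ[ℝ] EE n)| = 1 := by
    have e : (((Submodule.span ℝ {z})ᗮ.reflection : EE n →L[ℝ] EE n) : EE n →ₗ[ℝ] EE n) = ((Submodule.span ℝ {z})ᗮ.reflection).toLinearMap := rfl
    rw [e, this, abs_pow]; simp
  rw [h2, mul_one, ← pow_mul, abs_of_nonneg]
  rw [pow_mul]; positivity

lemma kelvin_split {n : ℕ} (hn : 1 ≤ n) {l : ℝ} (hl : 0 < l) (h : EE n → ℝ) (hi : Integrable h) :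
    IntegrableOn h {z | l < ‖z‖} ∧
    IntegrableOn (fun z => (l / ‖z‖) ^ (2 * n) * h (kv l z)) {z | l < ‖z‖} ∧
    ∫ z, h z = ∫ z in {z | l < ‖z‖}, (h z + (l / ‖z‖) ^ (2 * n) * h (kv l z)) := by
  have : Nonempty (Fin n) := ⟨⟨0, hn⟩⟩
  set S := {z : EE n | l < ‖z‖} with hS
  have mS : MeasurableSet S := measurableSet_lt measurable_const measurable_norm
  have hne : ∀ z ∈ S, z ≠ 0 := fun z hz h0 => by
    simp [hS, h0] at hz; linarith
  choose! A hA hdet using fun (z : EE n) (hz : z ≠ 0) => kv_deriv (l := l) z hz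
  have inj : Set.InjOn (kv l) S := by
    intro a _ b _ hab
    rw [← kv_kv hl a, hab, kv_kv hl]
  have hd : ∀ z ∈ S, HasFDerivWithinAt (kv l) (A z) S z :=
    fun z hz => (hA z (hne z hz)).hasFDerivWithinAt
  have e1 := integral_image_eq_integral_abs_det_fderiv_smul volume mS hd inj h
  have e2 := integrableOn_image_iff_integrableOn_abs_det_fderiv_smul volume mS hd inj h
  have hcong : ∀ z ∈ S, |(A z).det| • h (kv l z) = (l / ‖z‖) ^ (2 * n) * h (kv l z) := by
    intro z hz; rw [hdet z (hne z hz), smul_eq_mul]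
  have i2 : IntegrableOn (fun z => (l / ‖z‖) ^ (2 * n) * h (kv l z)) S :=
    (integrableOn_congr_fun hcong mS).1 (e2.1 hi.integrableOn)
  refine ⟨hi.integrableOn, i2, ?_⟩
  rw [integral_add hi.integrableOn i2, ← setIntegral_congr_fun mS hcong, ← e1,
    ← integral_add_compl mS hi]
  congr 1
  apply setIntegral_congr_set
  rw [kv_image hl]
  have : (Sᶜ : Set (EE n)) = closedBall 0 l := by
    ext z; simp [hS]
  rw [this]
  have hnull : volume (sphere (0 : EE n) l ∪ {0}) = 0 := by
    rw [measure_union_null_iff]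
    exact ⟨Measure.addHaar_sphere _ _ _, measure_singleton _⟩
  have hae : ∀ᵐ z : EE n, z ∉ sphere (0 : EE n) l ∪ {0} := measure_eq_zero_iff_ae_notMem.1 hnull
  filter_upwards [hae] with z hz
  simp only [Set.mem_union, mem_sphere_zero_iff_norm, Set.mem_singleton_iff, not_or] at hz
  apply propext
  change z ∈ closedBall 0 l ↔ z ∈ ball 0 l \ {0}
  simp only [mem_closedBall_zero_iff, Set.mem_sdiff, mem_ball_zero_iff, Set.mem_singleton_iff]
  exact ⟨fun h => ⟨lt_of_le_of_ne h hz.1, hz.2⟩, fun h => h.1.le⟩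


lemma kv_id1 {n : ℕ} {l : ℝ} (hl : 0 < l) (y z : EE n) (hy : y ≠ 0) (hz : z ≠ 0) :
    ‖y - kv l z‖ = l * (‖y‖ * ‖kv l y - z‖ / l) / ‖z‖ := by
  have h := EuclideanGeometry.dist_inversion_mul_dist_center_eq (c := (0 : EE n)) (R := l) hy hz
  simp only [← kv_eq, dist_eq_norm, sub_zero] at h
  have : ‖z‖ ≠ 0 := norm_ne_zero_iff.2 hz
  have hl' := hl.ne'
  rw [eq_div_iff this]
  field_simp
  linarith

lemma kv_id2 {n : ℕ} {l : ℝ} (y z : EE n) (hy : y ≠ 0) (hz : z ≠ 0) :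
    ‖kv l y - kv l z‖ = l ^ 2 / (‖y‖ * ‖z‖) * ‖y - z‖ := by
  have h := EuclideanGeometry.dist_inversion_inversion (c := (0 : EE n)) hy hz l
  simpa only [← kv_eq, dist_eq_norm, sub_zero] using h

lemma kv_id3 {n : ℕ} {l : ℝ} (hl : 0 < l) (y z : EE n) (hy : y ≠ 0) :
    (‖y‖ * ‖kv l y - z‖ / l) ^ 2 - ‖y - z‖ ^ 2
      = (‖y‖ ^ 2 - l ^ 2) * (‖z‖ ^ 2 - l ^ 2) / l ^ 2 := by
  have : ‖y‖ ≠ 0 := norm_ne_zero_iff.2 hy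
  have hl' := hl.ne'
  have e1 : ‖kv l y - z‖ ^ 2 = (l ^ 2 / ‖y‖) ^ 2 - 2 * ((l / ‖y‖) ^ 2 * inner ℝ y z) + ‖z‖ ^ 2 := by
    rw [norm_sub_sq_real, norm_kv, kv, inner_smul_left]; simp
  have e2 := norm_sub_sq_real y z
  rw [div_pow, mul_pow, e1, e2]
  field_simp
  ring

lemma pw_ineq (k : ℕ) (hk : 1 ≤ k) (a b : ℝ) (ha : 0 < a) (hab : a ≤ b) :
    (b ^ 2 - a ^ 2) / (2 * b ^ (k + 2)) ≤ (a ^ k)⁻¹ - (b ^ k)⁻¹ := by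
  obtain ⟨m, rfl⟩ : ∃ m, k = m + 1 := ⟨k - 1, by omega⟩
  have hb : 0 < b := ha.trans_le hab
  have h1 : (a * b ^ m)⁻¹ ≤ (a ^ (m + 1))⁻¹ := by
    rw [pow_succ']
    gcongr
  have h2 : (b ^ 2 - a ^ 2) / (2 * b ^ (m + 1 + 2)) ≤ (a * b ^ m)⁻¹ - (b ^ (m + 1))⁻¹ := by
    have : (a * b ^ m)⁻¹ - (b ^ (m + 1))⁻¹ - (b ^ 2 - a ^ 2) / (2 * b ^ (m + 1 + 2))
        = (b - a) * (2 * b ^ 2 - a * (b + a)) / (2 * a * b ^ (m + 3)) := by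
      field_simp
      ring
    have h3 : 0 ≤ (b - a) * (2 * b ^ 2 - a * (b + a)) / (2 * a * b ^ (m + 3)) := by
      have : 0 ≤ 2 * b ^ 2 - a * (b + a) := by nlinarith
      have := sub_nonneg.2 hab
      positivity
    linarith
  linarith

lemma kelvin_diff {n k : ℕ} (hk : n = k + 4) {l : ℝ} (hl : 0 < l) (f : EE n → ℝ) (y : EE n)
    (hy : y ≠ 0) (h1 : Integrable (fun z => f z / ‖y - z‖ ^ k))
    (h2 : Integrable (fun z => f z / ‖kv l y - z‖ ^ k)) :
    IntegrableOn (fun z => ((‖y - z‖ ^ k)⁻¹ - ((‖y‖ * ‖kv l y - z‖ / l) ^ k)⁻¹) *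
      (f z - (l / ‖z‖) ^ (n + 4) * f (kv l z))) {z | l < ‖z‖} ∧
    (∫ z, f z / ‖y - z‖ ^ k) - (l / ‖y‖) ^ k * ∫ z, f z / ‖kv l y - z‖ ^ k
      = ∫ z in {z | l < ‖z‖}, ((‖y - z‖ ^ k)⁻¹ - ((‖y‖ * ‖kv l y - z‖ / l) ^ k)⁻¹) *
      (f z - (l / ‖z‖) ^ (n + 4) * f (kv l z)) := by
  obtain ⟨a1, a2, a3⟩ := kelvin_split (by omega) hl _ h1
  obtain ⟨b1, b2, b3⟩ := kelvin_split (by omega) hl _ h2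
  have mS : MeasurableSet {z : EE n | l < ‖z‖} := measurableSet_lt measurable_const measurable_norm
  have key : ∀ z ∈ {z : EE n | l < ‖z‖},
      (f z / ‖y - z‖ ^ k + (l / ‖z‖) ^ (2 * n) * (f (kv l z) / ‖y - kv l z‖ ^ k)) -
      (l / ‖y‖) ^ k * (f z / ‖kv l y - z‖ ^ k
        + (l / ‖z‖) ^ (2 * n) * (f (kv l z) / ‖kv l y - kv l z‖ ^ k))
      = ((‖y - z‖ ^ k)⁻¹ - ((‖y‖ * ‖kv l y - z‖ / l) ^ k)⁻¹) *
      (f z - (l / ‖z‖) ^ (n + 4) * f (kv l z)) := by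
    intro z hz
    have hzn : 0 < ‖z‖ := hl.trans hz
    have hz0 : z ≠ 0 := norm_pos_iff.1 hzn
    have hyn : 0 < ‖y‖ := norm_pos_iff.2 hy
    rw [kv_id1 hl y z hy hz0, kv_id2 y z hy hz0]
    generalize ‖y - z‖ = A
    generalize ‖kv l y - z‖ = B
    have hp : (l / ‖z‖) ^ (2 * n) = (l / ‖z‖) ^ (n + 4) * (l / ‖z‖) ^ k := by
      rw [← pow_add]; congr 1; omega
    rw [hp]
    simp only [div_eq_mul_inv, mul_pow, mul_inv, inv_pow, inv_inv]
    have q1 : l ^ k * (l ^ k)⁻¹ = 1 := mul_inv_cancel₀ (by positivity)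
    have q2 : ‖z‖ ^ k * (‖z‖ ^ k)⁻¹ = 1 := mul_inv_cancel₀ (by positivity)
    have q3 : ‖y‖ ^ k * (‖y‖ ^ k)⁻¹ = 1 := mul_inv_cancel₀ (by positivity)
    generalize (A ^ k)⁻¹ = A'
    generalize (B ^ k)⁻¹ = B'
    rw [← pow_mul, mul_comm 2 k, pow_mul]
    generalize f (kv l z) = F
    generalize f z = F0
    generalize l ^ (n + 4) = L
    generalize (‖z‖ ^ (n+4))⁻¹ = Z
    generalize l ^ k = x1 at *
    generalize ‖z‖ ^ k = x2 at *
    generalize ‖y‖ ^ k = x3 at *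
    have hx1 : x1 ≠ 0 := by rintro rfl; simp at q1
    have hx2 : x2 ≠ 0 := by rintro rfl; simp at q2
    have hx3 : x3 ≠ 0 := by rintro rfl; simp at q3
    field_simp
    ring
  refine ⟨(integrableOn_congr_fun key mS).1 ((a1.add a2).sub ((b1.add b2).const_mul _)), ?_⟩
  rw [← setIntegral_congr_fun mS key, a3, b3, ← integral_const_mul]
  exact (integral_sub (a1.add a2) ((b1.add b2).const_mul _)).symm

lemma kelvin_lower {n k : ℕ} (hk : n = k + 4) (hk1 : 1 ≤ k) {l : ℝ} (hl : 0 < l) (f : EE n → ℝ)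
    (cf : Continuous f) (hIgr : ∀ y, Integrable (fun z => f z / ‖y - z‖ ^ k))
    (hpos : ∀ z, l < ‖z‖ → (l / ‖z‖) ^ (n + 4) * f (kv l z) < f z) :
    ∃ c > 0, ∀ y, l ≤ ‖y‖ → c * (‖y‖ ^ 2 - l ^ 2) / ‖y‖ ^ (k + 2) ≤
      (∫ z, f z / ‖y - z‖ ^ k) - (l / ‖y‖) ^ k * ∫ z, f z / ‖kv l y - z‖ ^ k := by
  have : Nonempty (Fin n) := ⟨⟨0, by omega⟩⟩
  have : Nontrivial (EE n) := inferInstance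
  obtain ⟨z0, hz0⟩ : ∃ z0 : EE n, ‖z0‖ = 3 * l := _root_.exists_norm_eq (EE n) (by positivity)
  set g : EE n → ℝ := fun z => f z - (l / ‖z‖) ^ (n + 4) * f (kv l z) with hg
  set S := {z : EE n | l < ‖z‖} with hS
  have mS : MeasurableSet S := measurableSet_lt measurable_const measurable_norm
  set A := closedBall z0 l with hA
  have hAb : ∀ z ∈ A, 2 * l ≤ ‖z‖ ∧ ‖z‖ ≤ 4 * l := by
    intro z hz
    rw [hA, mem_closedBall, dist_eq_norm] at hz
    have h1 := norm_sub_norm_le z z0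
    have h2 := norm_sub_norm_le z0 z
    rw [norm_sub_rev] at h2
    constructor <;> linarith
  have hAS : A ⊆ S := fun z hz => by
    have := (hAb z hz).1
    change l < ‖z‖; linarith
  have hne : ∀ z ∈ A, ‖z‖ ≠ 0 := fun z hz => by have := (hAb z hz).1; intro h; linarith
  have cg : ContinuousOn g A := by
    have c1 : ContinuousOn (fun z : EE n => l / ‖z‖) A :=
      continuousOn_const.div continuous_norm.continuousOn hne
    have c2 : ContinuousOn (kv l : EE n → EE n) A := (c1.pow 2).smul continuousOn_id
    exact cf.continuousOn.sub ((c1.pow _).mul (cf.comp_continuousOn c2))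
  have ig : IntegrableOn g A := cg.integrableOn_compact (isCompact_closedBall _ _)
  have gpos : ∀ z ∈ S, 0 < g z := fun z hz => sub_pos.2 (hpos z hz)
  have mpos : 0 < ∫ z in A, g z := by
    rw [setIntegral_pos_iff_support_of_nonneg_ae]
    · refine lt_of_lt_of_le (measure_ball_pos volume z0 hl) (measure_mono fun z hz => ?_)
      have hzA : z ∈ A := ball_subset_closedBall hz
      exact ⟨(gpos z (hAS hzA)).ne', hzA⟩
    · rw [EventuallyLE, ae_restrict_iff' measurableSet_closedBall]
      exact Eventually.of_forall fun z hz => (gpos z (hAS hz)).le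
    · exact ig
  refine ⟨3 / (2 * 5 ^ (k + 2)) * ∫ z in A, g z, by positivity, fun y hy => ?_⟩
  have hyn : 0 < ‖y‖ := hl.trans_le hy
  have hy0 : y ≠ 0 := norm_pos_iff.1 hyn
  obtain ⟨iG, eG⟩ := kelvin_diff hk hl f y hy0 (hIgr y) (hIgr _)
  rw [eG]
  have hae : ∀ᵐ z : EE n, z ≠ y := by
    have : volume ({y} : Set (EE n)) = 0 := measure_singleton _
    exact measure_eq_zero_iff_ae_notMem.1 this
  have hba : ∀ z ∈ S, z ≠ y → 0 < ‖y - z‖ ∧ ‖y - z‖ ≤ ‖y‖ * ‖kv l y - z‖ / l := by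
    intro z hz hzy
    refine ⟨norm_pos_iff.2 (sub_ne_zero.2 hzy.symm), ?_⟩
    have h3 := kv_id3 hl y z hy0
    have : 0 ≤ (‖y‖ ^ 2 - l ^ 2) * (‖z‖ ^ 2 - l ^ 2) / l ^ 2 := by
      have h1 : 0 ≤ ‖y‖ ^ 2 - l ^ 2 := by nlinarith
      have h2 : 0 ≤ ‖z‖ ^ 2 - l ^ 2 := by have : l < ‖z‖ := hz; nlinarith
      positivity
    exact abs_le_of_sq_le_sq' (by linarith) (by positivity) |>.2
  have e1 : 3 / (2 * 5 ^ (k + 2)) * (∫ z in A, g z) * (‖y‖ ^ 2 - l ^ 2) / ‖y‖ ^ (k + 2)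
      = ∫ z in A, (3 * (‖y‖ ^ 2 - l ^ 2) / (2 * (5 * ‖y‖) ^ (k + 2))) * g z := by
    rw [integral_const_mul, mul_pow]; field_simp
  rw [e1]
  have hnn : 0 ≤ᵐ[volume.restrict S] fun z => ((‖y - z‖ ^ k)⁻¹ - ((‖y‖ * ‖kv l y - z‖ / l) ^ k)⁻¹) *
      (f z - (l / ‖z‖) ^ (n + 4) * f (kv l z)) := by
    rw [EventuallyLE, ae_restrict_iff' mS]
    filter_upwards [hae] with z hz hzS
    obtain ⟨p1, p2⟩ := hba z hzS hz
    refine mul_nonneg (sub_nonneg.2 ?_) (gpos z hzS).le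
    gcongr
  refine le_trans ?_ (setIntegral_mono_set iG hnn (LE.le.eventuallyLE hAS))
  apply setIntegral_mono_on_ae (ig.const_mul _) (iG.mono_set hAS) measurableSet_closedBall
  filter_upwards [hae] with z hz hzA
  refine mul_le_mul_of_nonneg_right ?_ (gpos z (hAS hzA)).le
  obtain ⟨p1, p2⟩ := hba z (hAS hzA) hz
  refine le_trans ?_ (pw_ineq k hk1 _ _ p1 p2)
  rw [kv_id3 hl y z hy0]
  obtain ⟨q1, q2⟩ := hAb z hzA
  have hb5 : ‖y‖ * ‖kv l y - z‖ / l ≤ 5 * ‖y‖ := by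
    have t1 : ‖kv l y - z‖ ≤ 5 * l := by
      refine (norm_sub_le _ _).trans ?_
      have : ‖kv l y‖ ≤ l := by rw [norm_kv, div_le_iff₀ hyn]; nlinarith
      linarith
    rw [div_le_iff₀ hl]; nlinarith
  have hb0 : 0 < ‖y‖ * ‖kv l y - z‖ / l := p1.trans_le p2
  have h1 : 0 ≤ ‖y‖ ^ 2 - l ^ 2 := by nlinarith
  have h2 : 3 * l ^ 2 ≤ ‖z‖ ^ 2 - l ^ 2 := by nlinarith
  have h4 : 3 * (‖y‖ ^ 2 - l ^ 2) ≤ (‖y‖ ^ 2 - l ^ 2) * (‖z‖ ^ 2 - l ^ 2) / l ^ 2 := by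
    rw [le_div_iff₀ (by positivity)]
    nlinarith
  refine div_le_div₀ ?_ h4 (by positivity) (by gcongr)
  exact le_trans (by positivity) h4


lemma ray {n : ℕ} (k : ℕ) (hk : 1 ≤ k) (u : EE n → ℝ) (hu : Differentiable ℝ u) (h0 : ∀ x, 0 ≤ u x)
    (y : EE n) (τ : ℝ) (hτ : 0 < τ) (hτ1 : τ ≤ 1)
    (he : ∀ t ∈ Set.Icc τ 1, 0 ≤ k * u (t • y) + 2 * fderiv ℝ u (t • y) (t • y)) :
    τ ^ k * u (τ • y) ^ 2 ≤ u y ^ 2 := by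
  have hd : ∀ t : ℝ, HasDerivAt (fun t : ℝ => t ^ k * u (t • y) ^ 2)
      (k * t ^ (k - 1) * u (t • y) ^ 2 + t ^ k * (2 * u (t • y) * fderiv ℝ u (t • y) y)) t := by
    intro t
    have h1 : HasDerivAt (fun t : ℝ => u (t • y)) (fderiv ℝ u (t • y) y) t := by
      have h2 : HasDerivAt (fun t : ℝ => t • y) y t := by
        simpa using (hasDerivAt_id t).smul_const y
      exact (hu (t • y)).hasFDerivAt.comp_hasDerivAt t h2
    have := (hasDerivAt_pow k t).mul (h1.pow 2)
    exact this.congr_deriv (by norm_num)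
  have hm : MonotoneOn (fun t : ℝ => t ^ k * u (t • y) ^ 2) (Set.Icc τ 1) := by
    apply monotoneOn_of_deriv_nonneg (convex_Icc _ _)
    · exact fun t _ => (hd t).continuousAt.continuousWithinAt
    · exact fun t _ => (hd t).differentiableAt.differentiableWithinAt
    · intro t ht
      rw [interior_Icc] at ht
      rw [(hd t).deriv]
      have ht' : t ∈ Set.Icc τ 1 := Set.Ioo_subset_Icc_self ht
      have htp : 0 < t := hτ.trans_le ht'.1
      have e := he t ht'
      rw [map_smul, smul_eq_mul] at e
      have : k * t ^ (k - 1) * u (t • y) ^ 2 + t ^ k * (2 * u (t • y) * fderiv ℝ u (t • y) y)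
          = t ^ (k - 1) * u (t • y) * (k * u (t • y) + 2 * (t * fderiv ℝ u (t • y) y)) := by
        obtain ⟨m, rfl⟩ : ∃ m, k = m + 1 := ⟨k - 1, by omega⟩
        simp only [Nat.add_sub_cancel, pow_succ]
        ring
      rw [this]
      have := h0 (t • y)
      positivity
  have := hm (Set.left_mem_Icc.2 hτ1) (Set.right_mem_Icc.2 hτ1) hτ1
  simpa using this

lemma ray_kv {n : ℕ} (k : ℕ) (hk : 1 ≤ k) (u : EE n → ℝ) (hu : Differentiable ℝ u)
    (h0 : ∀ x, 0 ≤ u x) (y : EE n) (μ : ℝ) (hμ : 0 < μ) (hμy : μ ≤ ‖y‖)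
    (he : ∀ t ∈ Set.Icc ((μ / ‖y‖) ^ 2) 1, 0 ≤ k * u (t • y) + 2 * fderiv ℝ u (t • y) (t • y)) :
    (μ / ‖y‖) ^ k * u (kv μ y) ≤ u y := by
  have hy : 0 < ‖y‖ := hμ.trans_le hμy
  have hq : μ / ‖y‖ ≤ 1 := (div_le_one hy).2 hμy
  have := ray k hk u hu h0 y ((μ / ‖y‖) ^ 2) (by positivity) (pow_le_one₀ (by positivity) hq) he
  refine (abs_le_of_sq_le_sq' ?_ (h0 y)).2
  rw [mul_pow, ← pow_mul, mul_comm k 2, pow_mul]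
  exact this

lemma deriv_nonneg_right (g : ℝ → ℝ) (g' : ℝ) (hg : HasDerivAt g g' 1) (h1 : g 1 = 0)
    (h : ∀ t, 1 ≤ t → 0 ≤ g t) : 0 ≤ g' := by
  have := (hasDerivAt_iff_tendsto_slope.1 hg).mono_left
    (nhdsWithin_mono (1 : ℝ) (fun t (ht : t ∈ Set.Ioi (1:ℝ)) => (ne_of_gt ht : t ≠ 1)))
  refine ge_of_tendsto this ?_
  filter_upwards [self_mem_nhdsWithin] with t ht
  have ht' : 1 < t := ht
  rw [slope_def_field, h1, sub_zero]
  exact div_nonneg (h t ht'.le) (by linarith)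

lemma bdry_e {n : ℕ} (k : ℕ) (u : EE n → ℝ) (hu : Differentiable ℝ u) (l c : ℝ) (hl : 0 < l)
    (hc : 0 < c)
    (H : ∀ y, l ≤ ‖y‖ → c * (‖y‖ ^ 2 - l ^ 2) / ‖y‖ ^ (k + 2) ≤ u y - (l / ‖y‖) ^ k * u (kv l y))
    (y : EE n) (hy : ‖y‖ = l) : 0 < k * u y + 2 * fderiv ℝ u y y := by
  set C := c / l ^ k with hC
  have hC0 : 0 < C := by positivity
  have d1 : HasDerivAt (fun t : ℝ => u (t • y)) (fderiv ℝ u y y) 1 := by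
    have h2 : HasDerivAt (fun t : ℝ => t • y) y 1 := by
      simpa using (hasDerivAt_id (1:ℝ)).smul_const y
    have := (hu ((1:ℝ) • y)).hasFDerivAt.comp_hasDerivAt (1:ℝ) h2
    rw [one_smul] at this
    exact this
  have d2 : HasDerivAt (fun t : ℝ => u (t⁻¹ • y)) (-fderiv ℝ u y y) 1 := by
    have h2 : HasDerivAt (fun t : ℝ => t⁻¹ • y) (-y) 1 := by
      simpa using (hasDerivAt_inv (one_ne_zero (α := ℝ))).smul_const y
    have := (hu ((1:ℝ)⁻¹ • y)).hasFDerivAt.comp_hasDerivAt (1:ℝ) h2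
    rw [inv_one, one_smul, map_neg] at this
    exact this
  have d3 := (((hasDerivAt_pow (k + 2) (1:ℝ)).mul d1).sub ((hasDerivAt_pow 2 (1:ℝ)).mul d2)).sub
    (((hasDerivAt_pow 2 (1:ℝ)).sub_const 1).const_mul C)
  have := deriv_nonneg_right _ _ d3 (by simp) ?_
  · simp at this
    linarith
  · intro t ht
    have ht0 : 0 < t := by linarith
    have hn : ‖t • y‖ = t * l := by rw [norm_smul, Real.norm_of_nonneg ht0.le, hy]
    have h := H (t • y) (by rw [hn]; nlinarith)
    have hkv : kv l (t • y) = t⁻¹ • y := by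
      rw [kv, hn, smul_smul]; congr 1; field_simp
    rw [hkv, hn] at h
    have hq : l / (t * l) = t⁻¹ := by field_simp
    rw [hq] at h
    have e1 : c * ((t * l) ^ 2 - l ^ 2) / (t * l) ^ (k + 2) = C * (t ^ 2 - 1) / t ^ (k + 2) := by
      rw [hC, mul_pow t l (k + 2)]; field_simp; ring
    rw [e1, div_le_iff₀ (by positivity)] at h
    have e2 : (u (t • y) - t⁻¹ ^ k * u (t⁻¹ • y)) * t ^ (k + 2)
        = t ^ (k + 2) * u (t • y) - t ^ 2 * u (t⁻¹ • y) := by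
      generalize u (t⁻¹ • y) = B
      rw [inv_pow]
      field_simp
      ring
    rw [e2] at h
    simp only [Pi.sub_apply, Pi.mul_apply]
    linarith

lemma open_step {n : ℕ} (k : ℕ) (hk : 1 ≤ k) (u : EE n → ℝ) (hu : ContDiff ℝ 1 u)
    (h0 : ∀ x, 0 ≤ u x) (l c : ℝ) (hl : 0 < l) (hc : 0 < c)
    (H : ∀ y, l ≤ ‖y‖ → c * (‖y‖ ^ 2 - l ^ 2) / ‖y‖ ^ (k + 2) ≤ u y - (l / ‖y‖) ^ k * u (kv l y)) :
    ∀ᶠ μ in 𝓝 l, ∀ y, μ ≤ ‖y‖ → (μ / ‖y‖) ^ k * u (kv μ y) ≤ u y := by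
  have cu : Continuous u := hu.continuous
  have du : Differentiable ℝ u := hu.differentiable (by norm_num)
  -- infinity
  have inf : ∃ M, 0 < M ∧ ∀ᶠ μ in 𝓝 l, ∀ y : EE n, M < ‖y‖ → (μ / ‖y‖) ^ k * u (kv μ y) ≤ u y := by
    have hcont : Continuous (fun q : ℝ × EE n => q.1 ^ k * u (q.1 ^ 2 • q.2) - l ^ k * u (l ^ 2 • q.2)) := by
      fun_prop
    have hev : ∀ᶠ q : ℝ × EE n in 𝓝 (l, 0),
        q.1 ^ k * u (q.1 ^ 2 • q.2) - l ^ k * u (l ^ 2 • q.2) < 3 / 4 * c := by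
      apply hcont.continuousAt.eventually_lt_const
      simp only [smul_zero, sub_self]; positivity
    rw [nhds_prod_eq] at hev
    obtain ⟨pa, hpa, pb, hpb, hab⟩ := eventually_prod_iff.1 hev
    obtain ⟨δ, hδ, hδb⟩ := Metric.eventually_nhds_iff.1 hpb
    refine ⟨max (2 * l) (1 / δ), by positivity, ?_⟩
    filter_upwards [hpa] with μ hμ y hy
    have hy1 : 2 * l < ‖y‖ := (le_max_left _ _).trans_lt hy
    have hy2 : 1 / δ < ‖y‖ := (le_max_right _ _).trans_lt hy
    have hyn : 0 < ‖y‖ := by linarith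
    set w : EE n := (1 / ‖y‖) ^ 2 • y with hw
    have hwn : ‖w‖ < δ := by
      rw [hw, norm_smul, Real.norm_of_nonneg (by positivity)]
      have : (1 / ‖y‖) ^ 2 * ‖y‖ = 1 / ‖y‖ := by field_simp
      rw [this, div_lt_comm₀ hyn hδ]; exact hy2
    have hkw : ∀ ν : ℝ, kv ν y = ν ^ 2 • w := by
      intro ν; rw [kv, hw, smul_smul]; congr 1; field_simp
    have h1 := hab hμ (hδb (by simpa [dist_eq_norm] using hwn))
    have h2 := H y (by linarith)
    simp only at h1
    rw [← hkw, ← hkw] at h1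
    have h3 : 3 / 4 * c / ‖y‖ ^ k ≤ c * (‖y‖ ^ 2 - l ^ 2) / ‖y‖ ^ (k + 2) := by
      rw [div_le_div_iff₀ (by positivity) (by positivity), pow_add]
      have : 3 / 4 * ‖y‖ ^ 2 ≤ ‖y‖ ^ 2 - l ^ 2 := by nlinarith
      have : 3 / 4 * ‖y‖ ^ 2 * (c * ‖y‖ ^ k) ≤ (‖y‖ ^ 2 - l ^ 2) * (c * ‖y‖ ^ k) := by gcongr
      linarith
    rw [div_pow] at h2 ⊢
    have h4 := h3.trans h2
    have h5 : (μ ^ k * u (kv μ y) - l ^ k * u (kv l y)) / ‖y‖ ^ k ≤ 3 / 4 * c / ‖y‖ ^ k := by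
      gcongr
    rw [sub_div] at h5
    have e1 : l ^ k / ‖y‖ ^ k * u (kv l y) = l ^ k * u (kv l y) / ‖y‖ ^ k := by ring
    have e2 : μ ^ k / ‖y‖ ^ k * u (kv μ y) = μ ^ k * u (kv μ y) / ‖y‖ ^ k := by ring
    linarith
  obtain ⟨M, hM, hinf⟩ := inf
  set K : Set (EE n) := closedBall 0 M \ ball 0 (l / 2) with hK
  have cK : IsCompact K := (isCompact_closedBall _ _).diff isOpen_ball
  have comp : ∀ᶠ μ in 𝓝 l, ∀ y ∈ K, μ ≤ ‖y‖ → (μ / ‖y‖) ^ k * u (kv μ y) ≤ u y := by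
    apply cK.eventually_forall_of_forall_eventually
    intro y0 hy0
    have hy0n : l / 2 ≤ ‖y0‖ := by
      have := hy0.2; simpa using this
    have hy0p : 0 < ‖y0‖ := by linarith
    have cdiv : ContinuousAt (fun q : ℝ × EE n => q.1 / ‖q.2‖) (l, y0) :=
      continuousAt_fst.div continuousAt_snd.norm hy0p.ne'
    have ckv : ContinuousAt (fun q : ℝ × EE n => kv q.1 q.2) (l, y0) :=
      (cdiv.pow 2).smul continuousAt_snd
    rcases lt_trichotomy ‖y0‖ l with hlt | heq | hgt
    · have : ∀ᶠ q : ℝ × EE n in 𝓝 (l, y0), ‖q.2‖ < q.1 :=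
        (continuousAt_snd.norm).eventually_lt continuousAt_fst hlt
      filter_upwards [this] with q hq hq'
      linarith
    · set e : EE n → ℝ := fun x => k * u x + 2 * fderiv ℝ u x x with he
      have ce : Continuous e := by
        have c1 : Continuous (fderiv ℝ u) := hu.continuous_fderiv (by norm_num)
        exact (continuous_const.mul cu).add (continuous_const.mul (c1.clm_apply continuous_id))
      have epos : 0 < e y0 := bdry_e k u du l c hl hc H y0 heq
      obtain ⟨δ, hδ, hδe⟩ := Metric.eventually_nhds_iff.1 (ce.continuousAt.eventually_const_lt epos)
      have cdist : ContinuousAt (fun q : ℝ × EE n => ‖q.2 - y0‖ + (1 - (q.1 / ‖q.2‖) ^ 2) * ‖q.2‖) (l, y0) :=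
        ((continuousAt_snd.sub continuousAt_const).norm).add
          ((continuousAt_const.sub (cdiv.pow 2)).mul continuousAt_snd.norm)
      have ev1 : ∀ᶠ q : ℝ × EE n in 𝓝 (l, y0), ‖q.2 - y0‖ + (1 - (q.1 / ‖q.2‖) ^ 2) * ‖q.2‖ < δ := by
        apply cdist.eventually_lt_const
        simp only [sub_self, norm_zero, heq, div_self hl.ne']
        simpa using hδ
      have ev2 : ∀ᶠ q : ℝ × EE n in 𝓝 (l, y0), 0 < q.1 := continuousAt_fst.eventually_const_lt hl
      filter_upwards [ev1, ev2] with q hq1 hq2 hq3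
      apply ray_kv k hk u du h0 q.2 q.1 hq2 hq3
      intro t ht
      refine (hδe ?_).le
      rw [dist_eq_norm]
      have e3 : t • q.2 - y0 = (q.2 - y0) - (1 - t) • q.2 := by
        rw [sub_smul, one_smul]; abel
      rw [e3]
      refine lt_of_le_of_lt (norm_sub_le _ _) (lt_of_le_of_lt ?_ hq1)
      rw [norm_smul, Real.norm_of_nonneg (sub_nonneg.2 ht.2)]
      have := ht.1
      gcongr
    · have hst : (l / ‖y0‖) ^ k * u (kv l y0) < u y0 := by
        have h := H y0 hgt.le
        have : 0 < c * (‖y0‖ ^ 2 - l ^ 2) / ‖y0‖ ^ (k + 2) := by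
          have : 0 < ‖y0‖ ^ 2 - l ^ 2 := by nlinarith
          positivity
        linarith
      have : ∀ᶠ q : ℝ × EE n in 𝓝 (l, y0), (q.1 / ‖q.2‖) ^ k * u (kv q.1 q.2) < u q.2 :=
        ((cdiv.pow k).mul (cu.continuousAt.comp ckv)).eventually_lt
          (cu.continuousAt.comp continuousAt_snd) hst
      filter_upwards [this] with q hq _ using hq.le
  have ev3 : ∀ᶠ μ in 𝓝 l, l / 2 < μ := lt_mem_nhds (by linarith)
  filter_upwards [hinf, comp, ev3] with μ h1 h2 h3 y hy
  by_cases hyM : M < ‖y‖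
  · exact h1 y hyM
  · refine h2 y ⟨?_, ?_⟩ hy
    · simpa using hyM
    · simp only [mem_ball_zero_iff, not_lt]; linarith

lemma start_step {n : ℕ} (k : ℕ) (hk : 1 ≤ k) (u : EE n → ℝ) (hu : ContDiff ℝ 1 u)
    (h0 : ∀ x, 0 < u x) 
    (H : ∀ r > 0, ∃ c > 0, ∀ y, r ≤ ‖y‖ → c / ‖y‖ ^ k ≤ u y) :
    ∀ᶠ μ in 𝓝[>] (0:ℝ), ∀ y, μ ≤ ‖y‖ → (μ / ‖y‖) ^ k * u (kv μ y) ≤ u y := by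
  have cu : Continuous u := hu.continuous
  have du : Differentiable ℝ u := hu.differentiable (by norm_num)
  set e : EE n → ℝ := fun x => k * u x + 2 * fderiv ℝ u x x with he
  have ce : Continuous e := by
    have c1 : Continuous (fderiv ℝ u) := hu.continuous_fderiv (by norm_num)
    exact (continuous_const.mul cu).add (continuous_const.mul (c1.clm_apply continuous_id))
  have epos : 0 < e 0 := by
    have := h0 0
    have hk' : (0:ℝ) < k := by exact_mod_cast hk
    simp only [he, map_zero, mul_zero, add_zero]
    positivity
  obtain ⟨δ, hδ, hδe⟩ := Metric.eventually_nhds_iff.1 (ce.continuousAt.eventually_const_lt epos)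
  obtain ⟨c, hc, hcy⟩ := H δ hδ
  obtain ⟨M, hM⟩ := (isCompact_closedBall (0 : EE n) 1).exists_bound_of_continuousOn cu.continuousOn
  have ev1 : ∀ᶠ μ in 𝓝 (0:ℝ), μ ^ k * M < c := by
    have : Continuous (fun μ : ℝ => μ ^ k * M) := by fun_prop
    apply this.continuousAt.eventually_lt_const
    simpa [zero_pow (show k ≠ 0 by omega)] using hc
  have ev2 : ∀ᶠ μ in 𝓝 (0:ℝ), μ < 1 := gt_mem_nhds (by norm_num)
  filter_upwards [self_mem_nhdsWithin, nhdsWithin_le_nhds ev1, nhdsWithin_le_nhds ev2] with μ hμ h1 h2 y hy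
  have hμ0 : 0 < μ := hμ
  have hyn : 0 < ‖y‖ := hμ0.trans_le hy
  by_cases hyd : ‖y‖ < δ
  · apply ray_kv k hk u du (fun x => (h0 x).le) y μ hμ0 hy
    intro t ht
    refine (hδe ?_).le
    have ht0 : 0 ≤ t := le_trans (by positivity) ht.1
    rw [dist_zero_right, norm_smul, Real.norm_of_nonneg ht0]
    have := ht.2
    nlinarith
  · refine le_trans ?_ (hcy y (not_lt.1 hyd))
    have hb : u (kv μ y) ≤ M := by
      refine (le_abs_self _).trans (hM _ ?_)
      rw [mem_closedBall_zero_iff, norm_kv, div_le_one hyn]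
      nlinarith
    rw [div_pow, div_mul_eq_mul_div]
    gcongr
    exact le_trans (by gcongr) h1.le


lemma pot_pos {n : ℕ} (hn : 1 ≤ n) (k : ℕ) (f : EE n → ℝ) (cf : Continuous f) (hf : ∀ x, 0 ≤ f x)
    (x0 : EE n) (hx : 0 < f x0) (y : EE n) (hi : Integrable (fun z => f z / ‖y - z‖ ^ k)) :
    0 < ∫ z, f z / ‖y - z‖ ^ k := by
  have : Nonempty (Fin n) := ⟨⟨0, hn⟩⟩
  rw [integral_pos_iff_support_of_nonneg (fun z => div_nonneg (hf z) (by positivity)) hi]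
  have ho : IsOpen {z | 0 < f z} := isOpen_lt continuous_const cf
  have h1 : 0 < volume ({z | 0 < f z} \ {y}) := by
    rw [measure_sdiff_null (measure_singleton y)]
    exact ho.measure_pos volume ⟨x0, hx⟩
  refine h1.trans_le (measure_mono fun z hz => ?_)
  have h2 : 0 < f z := hz.1
  have h3 : z ≠ y := hz.2
  have h4 : 0 < ‖y - z‖ := norm_pos_iff.2 (sub_ne_zero.2 h3.symm)
  exact (by positivity : 0 < f z / ‖y - z‖ ^ k).ne'

lemma pot_lower {n : ℕ} (hn : 1 ≤ n) (k : ℕ) (f : EE n → ℝ) (cf : Continuous f)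
    (hf : ∀ x, 0 < f x) (hi : ∀ y, Integrable (fun z => f z / ‖y - z‖ ^ k)) (r : ℝ) (hr : 0 < r) :
    ∃ c > 0, ∀ y, r ≤ ‖y‖ → c / ‖y‖ ^ k ≤ ∫ z, f z / ‖y - z‖ ^ k := by
  have : Nonempty (Fin n) := ⟨⟨0, hn⟩⟩
  have iB : IntegrableOn f (ball 0 r) :=
    (cf.continuousOn.integrableOn_compact (isCompact_closedBall _ _)).mono_set ball_subset_closedBall
  have mpos : 0 < ∫ z in ball 0 r, f z := by
    rw [setIntegral_pos_iff_support_of_nonneg_ae]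
    · refine lt_of_lt_of_le (measure_ball_pos volume (0 : EE n) hr) (measure_mono fun z hz => ?_)
      exact ⟨(hf z).ne', hz⟩
    · exact Eventually.of_forall fun z => (hf z).le
    · exact iB
  refine ⟨(∫ z in ball 0 r, f z) / 2 ^ k, by positivity, fun y hy => ?_⟩
  have hyn : 0 < ‖y‖ := hr.trans_le hy
  have e1 : (∫ z in ball 0 r, f z) / 2 ^ k / ‖y‖ ^ k = ∫ z in ball 0 r, f z / (2 * ‖y‖) ^ k := by
    rw [integral_div, mul_pow, div_div]
  rw [e1]
  refine le_trans ?_ (setIntegral_le_integral (s := ball 0 r) (hi y)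
    (Eventually.of_forall fun z => div_nonneg (hf z).le (by positivity)))
  apply setIntegral_mono_on (iB.div_const _) (hi y).integrableOn measurableSet_ball
  intro z hz
  rw [mem_ball_zero_iff] at hz
  have h1 : ‖y - z‖ ≤ 2 * ‖y‖ := (norm_sub_le _ _).trans (by linarith)
  have h2 : 0 < ‖y - z‖ := by
    have := norm_sub_norm_le y z; linarith
  have := hf z
  gcongr

lemma vnorm_nonneg {n p : ℕ} (U : Fin p → EE n → ℝ) (x : EE n) : 0 ≤ vnorm U x := Real.sqrt_nonneg _

lemma le_vnorm {n p : ℕ} (U : Fin p → EE n → ℝ) (x : EE n) (i : Fin p) : U i x ≤ vnorm U x := by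
  apply Real.le_sqrt_of_sq_le
  exact Finset.single_le_sum (f := fun i => U i x ^ 2) (fun j _ => sq_nonneg _) (Finset.mem_univ i)

lemma vnorm_mono {n p : ℕ} (U : Fin p → EE n → ℝ) (x z : EE n) (a : ℝ) (ha : 0 ≤ a)
    (h0 : ∀ i x, 0 ≤ U i x) (h : ∀ i, a * U i x ≤ U i z) : a * vnorm U x ≤ vnorm U z := by
  apply Real.le_sqrt_of_sq_le
  rw [mul_pow, vnorm, Real.sq_sqrt (Finset.sum_nonneg fun i _ => sq_nonneg _), Finset.mul_sum]
  apply Finset.sum_le_sum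
  intro i _
  rw [← mul_pow]
  exact pow_le_pow_left₀ (mul_nonneg ha (h0 i x)) (h i) 2

/-- nonnegative entire solutions -/
structure Sol (n p : ℕ) (s : ℝ) (U : Fin p → EE n → ℝ) : Prop where
  nn : ∀ i x, 0 ≤ U i x
  cd : ∀ i, ContDiff ℝ 4 (U i)
  eq : ∀ i x, bilap (U i) x = (vnorm U x) ^ (s - 1) * U i x

lemma Sol.sub {n p : ℕ} {s : ℝ} {U : Fin p → EE n → ℝ} (hs : 1 < s) (h : Sol n p s U) (i : Fin p)
    (x : EE n) : U i x ^ s ≤ bilap (U i) x := by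
  rw [h.eq]
  have h0 := h.nn i x
  rcases h0.eq_or_lt with h1 | h1
  · rw [← h1, Real.zero_rpow (by linarith)]; simp
  · have : U i x ^ s = U i x ^ (s - 1) * U i x := by
      rw [← Real.rpow_add_one h1.ne']; congr 1; ring
    rw [this]
    have := le_vnorm U x i
    gcongr

lemma Sol.fpos {n p : ℕ} {s : ℝ} {U : Fin p → EE n → ℝ} (h : Sol n p s U) (i : Fin p)
    (x : EE n) (hx : 0 < U i x) : 0 < bilap (U i) x := by
  rw [h.eq]
  have := hx.trans_le (le_vnorm U x i)
  positivity

/-- key pointwise comparison -/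
lemma Sol.compare {n k p : ℕ} {s : ℝ} {U : Fin p → EE n → ℝ} (h : Sol n p s U) (hk : n = k + 4)
    (hs : 1 < s) (hs2 : s * k < n + 4) (i : Fin p) (hpos : ∀ x, 0 < U i x) (q : ℝ) (hq : 0 < q)
    (hq1 : q < 1) (x z : EE n) (hx : ∀ j, q ^ k * U j x ≤ U j z) :
    q ^ (n + 4) * bilap (U i) x < bilap (U i) z := by
  have hv := vnorm_mono U x z (q ^ k) (by positivity) h.nn hx
  have v0 : 0 < vnorm U x := (hpos x).trans_le (le_vnorm U x i)
  have p0 := hpos x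
  have e1 : bilap (U i) z ≥ (q ^ k * vnorm U x) ^ (s - 1) * (q ^ k * U i x) := by
    rw [h.eq]
    have := hx i
    have : 0 ≤ s - 1 := by linarith
    have := Real.rpow_nonneg (vnorm_nonneg U z) (s - 1)
    gcongr
  refine lt_of_lt_of_le ?_ e1
  have e2 : (q ^ k * vnorm U x) ^ (s - 1) * (q ^ k * U i x) = q ^ (s * k) * bilap (U i) x := by
    rw [h.eq, Real.mul_rpow (by positivity) v0.le, ← Real.rpow_natCast q k, ← Real.rpow_mul hq.le]
    have : q ^ (s * k) = q ^ ((k:ℝ) * (s - 1)) * q ^ (k:ℝ) := by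
      rw [← Real.rpow_add hq]; congr 1; ring
    rw [this]; ring
  rw [e2]
  have hb := h.fpos i x p0
  have e3 : q ^ (n + 4) < q ^ (s * k) := by
    rw [← Real.rpow_natCast]
    apply Real.rpow_lt_rpow_of_exponent_gt hq hq1
    push_cast; exact hs2
  gcongr

lemma Sol.ms {n k p : ℕ} {s : ℝ} {U : Fin p → EE n → ℝ} (h : Sol n p s U) (hk : n = k + 4)
    (hk1 : 1 ≤ k) (hs : 1 < s) (hs2 : s * k < n + 4) (i : Fin p) (l : ℝ) (hl : 0 < l) (y : EE n)
    (hy : l ≤ ‖y‖) : (l / ‖y‖) ^ k * U i (kv l y) ≤ U i y := by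
  obtain ⟨C, hC⟩ := repr2 n (by omega) s hs
  have hk' : n - 4 = k := by omega
  rw [hk'] at hC
  have R : ∀ i x, Integrable (fun z => bilap (U i) z / ‖x - z‖ ^ k) ∧
      ∫ z, bilap (U i) z / ‖x - z‖ ^ k = C * U i x :=
    fun i x => hC (U i) (h.cd i) (h.nn i) (h.sub hs i) x
  have cf : ∀ i, Continuous (bilap (U i)) := fun i => cont_bilap (h.cd i)
  have fnn : ∀ i x, 0 ≤ bilap (U i) x := fun i x => by
    rw [h.eq]; exact mul_nonneg (Real.rpow_nonneg (vnorm_nonneg U x) _) (h.nn i x)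
  -- dichotomy
  have dich : ∀ i, (∀ x, U i x = 0) ∨ (0 < C ∧ ∀ x, 0 < U i x) := by
    intro i
    by_cases hz : ∀ x, U i x = 0
    · exact Or.inl hz
    · right
      push Not at hz
      obtain ⟨x0, hx0⟩ := hz
      have hx0' : 0 < U i x0 := lt_of_le_of_ne (h.nn i x0) hx0.symm
      have hp : ∀ y, 0 < C * U i y := fun y => by
        rw [← (R i y).2]
        exact pot_pos (by omega) k _ (cf i) (fnn i) x0 (h.fpos i x0 hx0') y (R i y).1
      have hC0 : 0 < C := pos_of_mul_pos_left (hp x0) hx0'.le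
      exact ⟨hC0, fun x => pos_of_mul_pos_right (hp x) hC0.le⟩
  set S : Set ℝ := {μ | ∀ i y, μ ≤ ‖y‖ → (μ / ‖y‖) ^ k * U i (kv μ y) ≤ U i y} with hS
  have cd1 : ∀ i, ContDiff ℝ 1 (U i) := fun i => (h.cd i).of_le (by norm_num)
  -- start
  have st : ∀ᶠ μ in 𝓝[>] (0:ℝ), μ ∈ S := by
    have : ∀ᶠ μ in 𝓝[>] (0:ℝ), ∀ i, ∀ y, μ ≤ ‖y‖ → (μ / ‖y‖) ^ k * U i (kv μ y) ≤ U i y := by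
      rw [eventually_all]
      intro i
      rcases dich i with h0 | ⟨hC0, h0⟩
      · exact Eventually.of_forall fun μ y _ => by rw [h0, h0]; simp
      · apply start_step k hk1 (U i) (cd1 i) h0
        intro r hr
        obtain ⟨c, hc, hcy⟩ := pot_lower (by omega) k (bilap (U i)) (cf i)
          (fun x => h.fpos i x (h0 x)) (fun y => (R i y).1) r hr
        refine ⟨c / C, by positivity, fun y hy => ?_⟩
        have := hcy y hy
        rw [(R i y).2] at this
        rw [div_right_comm, div_le_iff₀ hC0]; linarith
    exact this
  -- openness
  have op : ∀ μ ∈ S, 0 < μ → ∀ᶠ ν in 𝓝 μ, ν ∈ S := by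
    intro μ hμ hμ0
    have : ∀ᶠ ν in 𝓝 μ, ∀ i, ∀ y, ν ≤ ‖y‖ → (ν / ‖y‖) ^ k * U i (kv ν y) ≤ U i y := by
      rw [eventually_all]
      intro i
      rcases dich i with h0 | ⟨hC0, h0⟩
      · exact Eventually.of_forall fun μ y _ => by rw [h0, h0]; simp
      · obtain ⟨c, hc, hcy⟩ := kelvin_lower hk hk1 hμ0 (bilap (U i)) (cf i) (fun y => (R i y).1)
          (fun z hz => h.compare hk hs hs2 i h0 (μ / ‖z‖) (div_pos hμ0 (hμ0.trans hz))
            ((div_lt_one (hμ0.trans hz)).2 hz) (kv μ z) z (fun j => hμ j z hz.le))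
        apply open_step k hk1 (U i) (cd1 i) (h.nn i) μ (c / C) hμ0 (by positivity)
        intro y hy
        have := hcy y hy
        rw [(R i y).2, (R i (kv μ y)).2] at this
        have e : c / C * (‖y‖ ^ 2 - μ ^ 2) / ‖y‖ ^ (k + 2)
            = (c * (‖y‖ ^ 2 - μ ^ 2) / ‖y‖ ^ (k + 2)) / C := by ring
        rw [e, div_le_iff₀ hC0]; linarith
    exact this
  -- conclusion
  have st2 : ∀ᶠ μ in 𝓝[>] (0:ℝ), μ ∈ S ∧ 0 < μ ∧ μ < l := by
    filter_upwards [st, self_mem_nhdsWithin, nhdsWithin_le_nhds (gt_mem_nhds hl)] with μ a b c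
    exact ⟨a, b, c⟩
  obtain ⟨a, haS, ha0, hal⟩ := st2.exists
  have closed : IsClosed (S ∩ Set.Icc a l) := by
    rw [← isSeqClosed_iff_isClosed]
    intro v w hv hw
    have hwI : w ∈ Set.Icc a l := isClosed_Icc.mem_of_tendsto hw (Eventually.of_forall fun m => (hv m).2)
    refine ⟨fun i y hy => ?_, hwI⟩
    have hw0 : 0 < w := ha0.trans_le hwI.1
    rcases hy.eq_or_lt with he | hlt
    · have hy1 : w / ‖y‖ = 1 := by rw [← he]; exact div_self hw0.ne'
      rw [kv, hy1]; simp
    · have hev : ∀ᶠ m in atTop, (v m / ‖y‖) ^ k * U i (kv (v m) y) ≤ U i y := by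
        filter_upwards [hw.eventually (gt_mem_nhds hlt)] with m hm
        exact (hv m).1 i y hm.le
      have hcont : Continuous fun μ : ℝ => (μ / ‖y‖) ^ k * U i (kv μ y) := by
        have := (h.cd i).continuous
        unfold kv
        fun_prop
      exact le_of_tendsto ((hcont.tendsto w).comp hw) hev
  have sub : Set.Icc a l ⊆ S := by
    apply closed.Icc_subset_of_forall_exists_gt haS
    intro x hx y hy
    have hx0 : 0 < x := ha0.trans_le hx.2.1
    have h1 := nhdsWithin_le_nhds (s := Set.Ioi x) (op x hx.1 hx0)
    have h2 : Set.Ioc x y ∈ 𝓝[>] x := Ioc_mem_nhdsGT hy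
    exact (inter_mem h1 h2 |> nonempty_of_mem : (_ ∩ Set.Ioc x y).Nonempty)
  exact sub ⟨hal.le, le_rfl⟩ i y hy

lemma Sol.translate {n p : ℕ} {s : ℝ} {U : Fin p → EE n → ℝ} (h : Sol n p s U) (x0 : EE n) :
    Sol n p s (fun i y => U i (x0 + y)) where
  nn i x := h.nn i _
  cd i := (h.cd i).comp (contDiff_const.add contDiff_id)
  eq i x := by
    have := bilap_scale (h.cd i) 1 1 x0 x
    simp only [one_mul, one_smul, one_pow] at this
    rw [this, h.eq]
    rfl

lemma Sol.le {n k p : ℕ} {s : ℝ} {U : Fin p → EE n → ℝ} (h : Sol n p s U) (hk : n = k + 4)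
    (hk1 : 1 ≤ k) (hs : 1 < s) (hs2 : s * k < n + 4) (i : Fin p) (a b : EE n) :
    U i b ≤ U i a := by
  rcases eq_or_ne a b with rfl | hab
  · rfl
  have hd : 0 < ‖b - a‖ := norm_pos_iff.2 (sub_ne_zero.2 hab.symm)
  have key : ∀ t : ℝ, 0 < t → √(t / (1 + t)) ^ k * U i b ≤ U i a := by
    intro t ht
    set x0 := b + t • (b - a) with hx0
    set y := -((1 + t) • (b - a)) with hy
    set l := √(t * (1 + t)) * ‖b - a‖ with hl
    have hsq : √(t * (1 + t)) ^ 2 = t * (1 + t) := Real.sq_sqrt (by positivity)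
    have hl0 : 0 < l := by positivity
    have hyn : ‖y‖ = (1 + t) * ‖b - a‖ := by
      rw [hy, norm_neg, norm_smul, Real.norm_of_nonneg (by positivity)]
    have hle : √(t * (1 + t)) ≤ 1 + t := by
      rw [Real.sqrt_le_left (by positivity)]; nlinarith
    have hq : l / ‖y‖ = √(t / (1 + t)) := by
      rw [hyn, hl, mul_div_mul_right _ _ hd.ne']
      symm
      rw [Real.sqrt_eq_iff_mul_self_eq (by positivity) (by positivity)]
      rw [← sq, div_pow, hsq]; field_simp
    have m := (h.translate x0).ms hk hk1 hs hs2 i l hl0 y (by rw [hyn, hl]; gcongr)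
    have e1 : x0 + y = a := by
      rw [hx0, hy, add_smul, one_smul]; abel
    have e2 : x0 + kv l y = b := by
      rw [kv, hq, Real.sq_sqrt (by positivity), hy, hx0, smul_neg, smul_smul]
      have : t / (1 + t) * (1 + t) = t := by field_simp
      rw [this]; abel
    rwa [e1, e2, hq] at m
  have lim : Tendsto (fun t : ℝ => √(t / (1 + t)) ^ k * U i b) atTop (𝓝 (√1 ^ k * U i b)) := by
    have h1 : Tendsto (fun t : ℝ => t / (1 + t)) atTop (𝓝 1) := by
      have : Tendsto (fun t : ℝ => 1 - (1 + t)⁻¹) atTop (𝓝 (1 - 0)) :=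
        tendsto_const_nhds.sub (tendsto_inv_atTop_zero.comp (tendsto_atTop_add_const_left _ _ tendsto_id))
      rw [sub_zero] at this
      refine this.congr' ?_
      filter_upwards [eventually_gt_atTop 0] with t ht
      field_simp; ring
    exact ((h1.sqrt).pow k).mul_const _
  rw [Real.sqrt_one, one_pow, one_mul] at lim
  exact le_of_tendsto lim ((eventually_gt_atTop 0).mono key)

lemma Sol.zero {n k p : ℕ} {s : ℝ} {U : Fin p → EE n → ℝ} (h : Sol n p s U) (hk : n = k + 4)
    (hk1 : 1 ≤ k) (hs : 1 < s) (hs2 : s * k < n + 4) (i : Fin p) (x : EE n) : U i x = 0 := by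
  have hc : U i = fun _ => U i 0 := by
    ext y
    exact le_antisymm (h.le hk hk1 hs hs2 i _ _) (h.le hk hk1 hs hs2 i _ _)
  have hb : bilap (U i) x = 0 := by
    have hl : lap (fun _ : EE n => U i 0) = fun _ => 0 := by
      ext z; simp [lap]
    rw [hc, bilap, hl]; simp [lap]
  by_contra hne
  exact (h.fpos i x (lt_of_le_of_ne (h.nn i x) (Ne.symm hne))).ne' hb

/-- Liouville theorem for nonnegative entire solutions of
`Δ² uᵢ = |U|^{s-1} uᵢ` on all of ℝⁿ, for subcritical `1 < s < (n+4)/(n-4)`. -/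
theorem statement0 (n p : ℕ) (hn : 5 ≤ n) (hp : 1 ≤ p) (s : ℝ)
    (hs1 : 1 < s) (hs2 : s < ((n : ℝ) + 4) / ((n : ℝ) - 4))
    (U : Fin p → EuclideanSpace ℝ (Fin n) → ℝ)
    (hnonneg : ∀ i x, 0 ≤ U i x)
    (hC4 : ∀ i, ContDiff ℝ 4 (U i))
    (hpde : ∀ i x, bilap (U i) x = (vnorm U x) ^ (s - 1) * U i x) :
    ∀ i x, U i x = 0 := by
  intro i x
  obtain ⟨k, hk⟩ : ∃ k, n = k + 4 := ⟨n - 4, by omega⟩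
  have hk1 : 1 ≤ k := by omega
  have hkr : (n : ℝ) - 4 = k := by rw [hk]; push_cast; ring
  have hk0 : (0 : ℝ) < k := by exact_mod_cast hk1
  rw [hkr, lt_div_iff₀ hk0] at hs2
  exact Sol.zero ⟨hnonneg, hC4, hpde⟩ hk hk1 hs1 hs2 i x
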